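/- Let C and C' be binary completely regular codes of length 16, each with minimum distance 6. Then C and C' are equivalent; that is, there exist a permutation σ of the 16 coordinates and a vector v ∈ F_2^16 such that C' = {(α ∘ σ⁻¹) + v : α ∈ C}. (In particular, every binary completely regular code of length 16 with minimum distance 6 is equivalent to the Nordstrom-Robinson code.) -/

import Mathlib

namespace NR
set_option linter.unusedSectionVars false
set_option linter.unusedVariables false
open Finset
open scoped symmDiff

section general
variable {α : Type} [Fintype α] [DecidableEq α]

/-- number of codewords at distance `k` from `x` -/
def N (C : Finset (Finset α)) (x : Finset α) (k : ℕ) : ℕ := #{c ∈ C | #(x ∆ c) = k}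

/-- number of codewords of weight `k` containing `x` -/
def deg (C : Finset (Finset α)) (k : ℕ) (x : Finset α) : ℕ := #{c ∈ C | #c = k ∧ x ⊆ c}

/-- the distance of `x` from the code is `i` -/
def IsD (C : Finset (Finset α)) (i : ℕ) (x : Finset α) : Prop :=
  (∃ c ∈ C, #(x ∆ c) = i) ∧ ∀ c ∈ C, i ≤ #(x ∆ c)

structure Good (C : Finset (Finset α)) : Prop where
  card : Fintype.card α = 16
  reg : ∀ i x y, IsD C i x → IsD C i y → ∀ k, N C x k = N C y k
  dist : ∀ c ∈ C, ∀ c' ∈ C, c ≠ c' → 6 ≤ #(c ∆ c')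
  ex : ∃ c ∈ C, ∃ c' ∈ C, c ≠ c' ∧ #(c ∆ c') = 6

@[simp] lemma sd_empty (x : Finset α) : x ∆ (∅ : Finset α) = x := symmDiff_bot x

lemma card_sd (x c : Finset α) : #(x ∆ c) + 2 * #(x ∩ c) = #x + #c := by
  have h1 : #(x ∆ c) = #(x \ c) + #(c \ x) := by
    rw [symmDiff_def]
    exact card_union_of_disjoint disjoint_sdiff_sdiff
  have h2 := card_sdiff_add_card_inter x c
  have h3 := card_sdiff_add_card_inter c x
  rw [inter_comm c x] at h3
  omega

lemma double (C : Finset (Finset α)) (k : ℕ) (P : Finset α) :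
    ∑ p ∈ Pᶜ, deg C k (insert p P) = (k - #P) * deg C k P := by
  have h1 : ∀ p ∈ Pᶜ, deg C k (insert p P) =
      ∑ c ∈ C with (#c = k ∧ P ⊆ c), if p ∈ c then 1 else 0 := by
    intro p _
    rw [← card_filter, filter_filter]
    unfold deg
    congr 1
    ext c
    simp only [mem_filter, Finset.insert_subset_iff]
    tauto
  rw [sum_congr rfl h1, sum_comm]
  have h2 : ∀ c ∈ ({c ∈ C | #c = k ∧ P ⊆ c} : Finset _),
      (∑ p ∈ Pᶜ, if p ∈ c then 1 else 0) = k - #P := by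
    intro c hc
    simp only [mem_filter] at hc
    rw [← card_filter]
    have : ({p ∈ Pᶜ | p ∈ c} : Finset α) = c \ P := by
      ext p; simp [and_comm]
    rw [this, card_sdiff_of_subset hc.2.2, hc.2.1]
  rw [sum_congr rfl h2, sum_const, smul_eq_mul, mul_comm]
  rfl


variable {C : Finset (Finset α)}

lemma wt (hG : Good C) (h0 : ∅ ∈ C) {c : Finset α} (hc : c ∈ C) : c = ∅ ∨ 6 ≤ #c := by
  by_cases h : c = ∅
  · exact Or.inl h
  · right
    have := hG.dist c hc ∅ h0 h
    have h2 := card_sd c ∅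
    rw [sd_empty] at this
    omega

lemma meet (hG : Good C) {c c' : Finset α} (hc : c ∈ C) (hc' : c' ∈ C) (h : c ≠ c') :
    2 * #(c ∩ c') + 6 ≤ #c + #c' := by
  have := hG.dist c hc c' hc' h
  have := card_sd c c'
  omega

lemma isD_self (hG : Good C) {c : Finset α} (hc : c ∈ C) : IsD C 0 c :=
  ⟨⟨c, hc, by simp⟩, fun _ _ => Nat.zero_le _⟩

lemma exists_six (hG : Good C) (h0 : ∅ ∈ C) : ∃ c ∈ C, #c = 6 := by
  obtain ⟨c, hc, c', hc', _, h6⟩ := hG.ex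
  have h := hG.reg 0 c ∅ (isD_self hG hc) (isD_self hG h0) 6
  have hpos : 0 < N C c 6 := by
    unfold N
    rw [card_pos]
    exact ⟨c', by simp [hc', h6]⟩
  rw [h] at hpos
  unfold N at hpos
  rw [card_pos] at hpos
  obtain ⟨d, hd⟩ := hpos
  simp only [mem_filter] at hd
  refine ⟨d, hd.1, ?_⟩
  have := card_sd ∅ d
  simp at this
  omega

lemma inter_le (x c : Finset α) : #(x ∩ c) ≤ #x ∧ #(x ∩ c) ≤ #c :=
  ⟨card_le_card inter_subset_left, card_le_card inter_subset_right⟩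

lemma sub_of_card {x c : Finset α} (h : #(x ∩ c) = #x) : x ⊆ c := by
  have := eq_of_subset_of_card_le (inter_subset_left (s₁ := x) (s₂ := c)) h.ge
  rw [← this]; exact inter_subset_right

lemma card_of_sub {x c : Finset α} (h : x ⊆ c) : #(x ∩ c) = #x := by
  rw [inter_eq_left.mpr h]

lemma isD_small (hG : Good C) (h0 : ∅ ∈ C) {x : Finset α} (hx : #x ≤ 3) : IsD C #x x := by
  refine ⟨⟨∅, h0, by simp⟩, fun c hc => ?_⟩
  have h1 := card_sd x c
  have h2 := inter_le x c
  rcases wt hG h0 hc with rfl | h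
  · simp
  · omega

lemma deg_pos {k : ℕ} {x c : Finset α} (hc : c ∈ C) (hk : #c = k) (hx : x ⊆ c) :
    0 < deg C k x := by
  unfold deg
  rw [card_pos]
  exact ⟨c, by simp [hc, hk, hx]⟩

lemma of_deg_pos {k : ℕ} {x : Finset α} (h : 0 < deg C k x) : ∃ c ∈ C, #c = k ∧ x ⊆ c := by
  unfold deg at h
  rw [card_pos] at h
  obtain ⟨c, hc⟩ := h
  simp only [mem_filter] at hc
  exact ⟨c, hc⟩

lemma N3_3 (hG : Good C) (h0 : ∅ ∈ C) {T : Finset α} (hT : #T = 3) :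
    N C T 3 = 1 + deg C 6 T := by
  have : ({c ∈ C | #(T ∆ c) = 3} : Finset _) =
      insert ∅ ({c ∈ C | #c = 6 ∧ T ⊆ c} : Finset _) := by
    ext c
    simp only [mem_filter, Finset.mem_insert]
    have h1 := card_sd T c
    have h2 := inter_le T c
    constructor
    · rintro ⟨hc, h⟩
      rcases wt hG h0 hc with rfl | h6
      · exact Or.inl rfl
      · exact Or.inr ⟨hc, by omega, sub_of_card (by omega)⟩
    · rintro (rfl | ⟨hc, h6, hs⟩)
      · exact ⟨h0, by simpa using hT⟩
      · have := card_of_sub hs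
        exact ⟨hc, by omega⟩
  unfold N deg
  rw [this, card_insert_of_notMem, add_comm]
  simp

lemma N2_4 (hG : Good C) (h0 : ∅ ∈ C) {P : Finset α} (hP : #P = 2) :
    N C P 4 = deg C 6 P := by
  unfold N deg
  congr 1
  ext c
  simp only [mem_filter]
  have h1 := card_sd P c
  have h2 := inter_le P c
  constructor
  · rintro ⟨hc, h⟩
    rcases wt hG h0 hc with rfl | h6
    · simp at h; omega
    · exact ⟨hc, by omega, sub_of_card (by omega)⟩
  · rintro ⟨hc, h6, hs⟩
    have := card_of_sub hs
    exact ⟨hc, by omega⟩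

lemma N3_4 (hG : Good C) (h0 : ∅ ∈ C) {T : Finset α} (hT : #T = 3) :
    N C T 4 = deg C 7 T := by
  unfold N deg
  congr 1
  ext c
  simp only [mem_filter]
  have h1 := card_sd T c
  have h2 := inter_le T c
  constructor
  · rintro ⟨hc, h⟩
    rcases wt hG h0 hc with rfl | h6
    · simp at h; omega
    · exact ⟨hc, by omega, sub_of_card (by omega)⟩
  · rintro ⟨hc, h6, hs⟩
    have := card_of_sub hs
    exact ⟨hc, by omega⟩

lemma N4_3 (hG : Good C) (h0 : ∅ ∈ C) {T : Finset α} (hT : #T = 4) :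
    N C T 3 = deg C 7 T := by
  unfold N deg
  congr 1
  ext c
  simp only [mem_filter]
  have h1 := card_sd T c
  have h2 := inter_le T c
  constructor
  · rintro ⟨hc, h⟩
    rcases wt hG h0 hc with rfl | h6
    · simp at h; omega
    · exact ⟨hc, by omega, sub_of_card (by omega)⟩
  · rintro ⟨hc, h6, hs⟩
    have := card_of_sub hs
    exact ⟨hc, by omega⟩

lemma exists_card_eq (hG : Good C) (k : ℕ) (hk : k ≤ 16) : ∃ T : Finset α, #T = k := by
  have := Finset.exists_subset_card_eq (s := (univ : Finset α)) (n := k)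
    (by rw [card_univ, hG.card]; exact hk)
  obtain ⟨t, -, h⟩ := this
  exact ⟨t, h⟩

/-- the hexads form a 3-design -/
lemma exists_lam (hG : Good C) (h0 : ∅ ∈ C) :
    ∃ l, 1 ≤ l ∧ ∀ T : Finset α, #T = 3 → deg C 6 T = l := by
  obtain ⟨c, hc, h6⟩ := exists_six hG h0
  obtain ⟨T, hTc, hT⟩ := Finset.exists_subset_card_eq (s := c) (n := 3) (by omega)
  refine ⟨deg C 6 T, deg_pos hc h6 hTc, fun T' hT' => ?_⟩
  have h1 := hG.reg 3 T T' (hT ▸ isD_small hG h0 hT.le) (hT' ▸ isD_small hG h0 hT'.le) 3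
  rw [N3_3 hG h0 hT, N3_3 hG h0 hT'] at h1
  omega

lemma deg6_le (hG : Good C) {x : Finset α} (hx : #x = 4) : deg C 6 x ≤ 1 := by
  unfold deg
  rw [card_le_one]
  intro c hc d hd
  simp only [mem_filter] at hc hd
  by_contra hne
  have h1 := meet hG hc.1 hd.1 hne
  have h2 := card_le_card (subset_inter hc.2.2 hd.2.2)
  omega

lemma card_compl' (hG : Good C) (x : Finset α) : #xᶜ = 16 - #x := by
  rw [card_compl, hG.card]

/-- relations for pairs -/
lemma deg6_pair (hG : Good C) {l : ℕ}
    (hl : ∀ T : Finset α, #T = 3 → deg C 6 T = l) {P : Finset α} (hP : #P = 2) :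
    14 * l = 4 * deg C 6 P := by
  have h := double C 6 P
  rw [sum_congr rfl (g := fun _ => l), sum_const, card_compl' hG, hP, smul_eq_mul] at h
  · omega
  · intro p hp
    apply hl
    rw [card_insert_of_notMem (by simpa using hp), hP]

lemma deg6_triple {l : ℕ}
    (hl : ∀ T : Finset α, #T = 3 → deg C 6 T = l) {T : Finset α} (hT : #T = 3) :
    ∑ p ∈ Tᶜ, deg C 6 (insert p T) = 3 * l := by
  rw [double, hT, hl T hT]

/-- number of uncovered fourth points -/
lemma uncovered (hG : Good C) {l : ℕ}
    (hl : ∀ T : Finset α, #T = 3 → deg C 6 T = l) {T : Finset α} (hT : #T = 3) :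
    #{p ∈ Tᶜ | deg C 6 (insert p T) = 0} + 3 * l = 13 ∧
    #{p ∈ Tᶜ | ¬ deg C 6 (insert p T) = 0} = 3 * l := by
  have h := deg6_triple hl hT
  have h1 : ∑ p ∈ Tᶜ, deg C 6 (insert p T) =
      ∑ p ∈ Tᶜ, if ¬ deg C 6 (insert p T) = 0 then 1 else 0 := by
    apply sum_congr rfl
    intro p hp
    have := deg6_le hG (x := insert p T)
      (by rw [card_insert_of_notMem (by simpa using hp), hT])
    split_ifs <;> omega
  rw [h1, ← card_filter] at h
  have h2 := card_filter_add_card_filter_not (s := Tᶜ) (fun p => deg C 6 (insert p T) = 0)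
  rw [card_compl' hG, hT] at h2
  omega

lemma lam_cases (hG : Good C) (h0 : ∅ ∈ C) :
    ∃ l, (l = 2 ∨ l = 4) ∧ ∀ T : Finset α, #T = 3 → deg C 6 T = l := by
  obtain ⟨l, h1, hl⟩ := exists_lam hG h0
  refine ⟨l, ?_, hl⟩
  obtain ⟨P, hP⟩ := exists_card_eq hG 2 (by norm_num)
  obtain ⟨T, hT⟩ := exists_card_eq hG 3 (by norm_num)
  have h2 := deg6_pair hG hl hP
  have h3 := (uncovered hG hl hT).1
  omega

/-- hexads meeting a 4-set in three points -/
lemma meet3 {l : ℕ}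
    (hl : ∀ T : Finset α, #T = 3 → deg C 6 T = l) {x : Finset α} (hx : #x = 4) :
    #{c ∈ C | #c = 6 ∧ #(x ∩ c) = 3} + 4 * deg C 6 x = 4 * l := by
  have h1 : ∑ T ∈ x.powersetCard 3, deg C 6 T = 4 * l := by
    rw [sum_congr rfl (g := fun _ => l), sum_const, card_powersetCard, hx, smul_eq_mul]
    · rfl
    · intro T hT
      exact hl T (mem_powersetCard.mp hT).2
  have h2 : ∑ T ∈ x.powersetCard 3, deg C 6 T =
      ∑ c ∈ C with #c = 6, Nat.choose #(x ∩ c) 3 := by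
    have : ∀ T ∈ x.powersetCard 3, deg C 6 T =
        ∑ c ∈ C with #c = 6, if T ⊆ c then 1 else 0 := by
      intro T _
      rw [← card_filter, filter_filter]
      rfl
    rw [sum_congr rfl this, sum_comm]
    apply sum_congr rfl
    intro c _
    rw [← card_filter, ← card_powersetCard]
    congr 1
    ext T
    simp only [mem_filter, mem_powersetCard, subset_inter_iff]
    tauto
  have h3 : ∑ c ∈ C with #c = 6, Nat.choose #(x ∩ c) 3 =
      ∑ c ∈ C with #c = 6, ((if #(x ∩ c) = 3 then 1 else 0) + 4 * (if x ⊆ c then 1 else 0)) := by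
    apply sum_congr rfl
    intro c _
    have h4 := (inter_le x c).1
    by_cases hs : x ⊆ c
    · rw [card_of_sub hs, hx]; simp [hs, Nat.choose]
    · have : #(x ∩ c) ≠ 4 := fun h => hs (sub_of_card (by omega))
      have h5 : #(x ∩ c) ≤ 3 := by omega
      simp only [hs, if_false]
      interval_cases #(x ∩ c) <;> rfl
  rw [sum_add_distrib, ← mul_sum, ← card_filter, ← card_filter, filter_filter, filter_filter] at h3
  rw [← h1, h2, h3]
  rfl

lemma N4_4 (hG : Good C) (h0 : ∅ ∈ C) {l : ℕ}
    (hl : ∀ T : Finset α, #T = 3 → deg C 6 T = l) {x : Finset α} (hx : #x = 4) :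
    N C x 4 + 4 * deg C 6 x = 1 + 4 * l + deg C 8 x := by
  have : ({c ∈ C | #(x ∆ c) = 4} : Finset _) =
      insert ∅ (({c ∈ C | #c = 6 ∧ #(x ∩ c) = 3} : Finset _) ∪
        ({c ∈ C | #c = 8 ∧ x ⊆ c} : Finset _)) := by
    ext c
    simp only [mem_filter, Finset.mem_insert, Finset.mem_union]
    have h1 := card_sd x c
    have h2 := inter_le x c
    constructor
    · rintro ⟨hc, h⟩
      rcases wt hG h0 hc with rfl | h6
      · exact Or.inl rfl
      · right
        by_cases h3 : #(x ∩ c) = 4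
        · exact Or.inr ⟨hc, by omega, sub_of_card (by omega)⟩
        · exact Or.inl ⟨hc, by omega, by omega⟩
    · rintro (rfl | ⟨hc, h6, hs⟩ | ⟨hc, h6, hs⟩)
      · exact ⟨h0, by simpa using hx⟩
      · exact ⟨hc, by omega⟩
      · have := card_of_sub hs
        exact ⟨hc, by omega⟩
  have hm := meet3 hl hx
  unfold N
  rw [this, card_insert_of_notMem, card_union_of_disjoint]
  · change _ + deg C 8 x + 1 + _ = _
    omega
  · rw [Finset.disjoint_left]
    intro c hc hd
    simp only [mem_filter] at hc hd
    omega
  · simp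

lemma deg7_of_deg6 (hG : Good C) {x : Finset α} (hx : #x = 4) (h6 : 0 < deg C 6 x) :
    deg C 7 x = 0 := by
  by_contra h
  obtain ⟨c, hc, hck, hcx⟩ := of_deg_pos h6
  obtain ⟨d, hd, hdk, hdx⟩ := of_deg_pos (Nat.pos_of_ne_zero h)
  have h1 := meet hG hc hd (by rintro rfl; omega)
  have h2 := card_le_card (subset_inter hcx hdx)
  omega

lemma isD3 (hG : Good C) (h0 : ∅ ∈ C) {x : Finset α} (hx : #x = 4) (h7 : 0 < deg C 7 x) :
    IsD C 3 x := by
  have h6 : deg C 6 x = 0 := by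
    by_contra h
    have := deg7_of_deg6 hG hx (Nat.pos_of_ne_zero h)
    omega
  obtain ⟨d, hd, hdk, hdx⟩ := of_deg_pos h7
  refine ⟨⟨d, hd, ?_⟩, fun c hc => ?_⟩
  · have h1 := card_sd x d
    have := card_of_sub hdx
    omega
  · have h1 := card_sd x c
    have h2 := inter_le x c
    rcases wt hG h0 hc with rfl | h
    · simp; omega
    · by_contra hlt
      have := deg_pos hc (k := 6) (by omega) (sub_of_card (x := x) (by omega))
      omega

lemma no7 (hG : Good C) (h0 : ∅ ∈ C) {x : Finset α} (hx : #x = 4) : deg C 7 x = 0 := by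
  obtain ⟨l, hlc, hl⟩ := lam_cases hG h0
  by_contra hne
  have hpos := Nat.pos_of_ne_zero hne
  have hD := isD3 hG h0 hx hpos
  obtain ⟨T, hTx, hT⟩ := Finset.exists_subset_card_eq (s := x) (n := 3) (by omega)
  have hDT : IsD C 3 T := hT ▸ isD_small hG h0 hT.le
  have h1 := hG.reg 3 x T hD hDT 4
  rw [N3_4 hG h0 hT] at h1
  have h2 := N4_4 hG h0 hl hx
  have h6 : deg C 6 x = 0 := by
    by_contra h
    have := deg7_of_deg6 hG hx (Nat.pos_of_ne_zero h)
    omega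
  have h3 := double C 7 T
  rw [hT] at h3
  have h4 : ∑ p ∈ Tᶜ, deg C 7 (insert p T) ≤
      ∑ p ∈ Tᶜ, (if deg C 6 (insert p T) = 0 then 1 else 0) * (1 + l) := by
    apply sum_le_sum
    intro p hp
    have hc : #(insert p T) = 4 := by rw [card_insert_of_notMem (by simpa using hp), hT]
    by_cases h7 : deg C 7 (insert p T) = 0
    · omega
    · have hD' := isD3 hG h0 hc (Nat.pos_of_ne_zero h7)
      have h8 := hG.reg 3 _ T hD' hDT 3
      rw [N4_3 hG h0 hc, N3_3 hG h0 hT, hl T hT] at h8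
      have h9 : deg C 6 (insert p T) = 0 := by
        by_contra h
        have := deg7_of_deg6 hG hc (Nat.pos_of_ne_zero h)
        omega
      simp [h9, h8]
  rw [← sum_mul, ← card_filter] at h4
  have h5 := uncovered hG hl hT
  rcases hlc with rfl | rfl <;> omega

lemma isD4 (hG : Good C) (h0 : ∅ ∈ C) {x : Finset α} (hx : #x = 4) (h6 : deg C 6 x = 0) :
    IsD C 4 x := by
  refine ⟨⟨∅, h0, by simpa using hx⟩, fun c hc => ?_⟩
  have h1 := card_sd x c
  have h2 := inter_le x c
  rcases wt hG h0 hc with rfl | h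
  · simp; omega
  · by_contra hlt
    have hs : x ⊆ c := sub_of_card (x := x) (by omega)
    have h7 := no7 hG h0 hx
    have hc67 : #c = 6 ∨ #c = 7 := by omega
    rcases hc67 with h | h
    · have := deg_pos hc h hs; omega
    · have := deg_pos hc h hs; omega

lemma isD2 (hG : Good C) (h0 : ∅ ∈ C) {x : Finset α} (hx : #x = 4) (h6 : 0 < deg C 6 x) :
    IsD C 2 x := by
  obtain ⟨d, hd, hdk, hdx⟩ := of_deg_pos h6
  refine ⟨⟨d, hd, ?_⟩, fun c hc => ?_⟩
  · have h1 := card_sd x d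
    have := card_of_sub hdx
    omega
  · have h1 := card_sd x c
    have h2 := inter_le x c
    rcases wt hG h0 hc with rfl | h
    · simp; omega
    · omega

lemma N4_div (hG : Good C) (h0 : ∅ ∈ C) {l : ℕ}
    (hl : ∀ T : Finset α, #T = 3 → deg C 6 T = l) {x : Finset α} (hx : #x = 4)
    (h6 : deg C 6 x = 0) : ∃ g ≤ 16, 4 * N C x 4 = g * (1 + l) := by
  have hD := isD4 hG h0 hx h6
  have hsing : ∀ (y : Finset α) (i : α), #(y ∆ {i}) + (if i ∈ y then 2 else 0) = #y + 1 := by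
    intro y i
    have := card_sd y {i}
    split_ifs with h
    · rw [inter_singleton_of_mem h] at this; simpa using this
    · rw [inter_singleton_of_notMem h] at this; simpa using this
  have hcomm : ∀ (i : α) (c : Finset α), (x ∆ {i}) ∆ c = (x ∆ c) ∆ {i} := by
    intro i c
    rw [symmDiff_right_comm]
  have h1 : ∑ i : α, N C (x ∆ {i}) 3 = 4 * N C x 4 := by
    have : ∀ i ∈ (univ : Finset α), N C (x ∆ {i}) 3 =
        ∑ c ∈ C, if #((x ∆ {i}) ∆ c) = 3 then 1 else 0 := by
      intro i _; rw [← card_filter]; rfl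
    rw [sum_congr rfl this, sum_comm]
    have h2 : ∀ c ∈ C, (∑ i : α, if #((x ∆ {i}) ∆ c) = 3 then 1 else 0) =
        4 * (if #(x ∆ c) = 4 then 1 else 0) := by
      intro c hc
      have h4 := hD.2 c hc
      rw [← card_filter]
      by_cases h : #(x ∆ c) = 4
      · have : ({i : α | #((x ∆ {i}) ∆ c) = 3} : Finset α) = x ∆ c := by
          ext i
          rw [mem_filter_univ, hcomm]
          have := hsing (x ∆ c) i
          split_ifs at this with hi
          · simp only [hi, iff_true]; omega
          · simp only [hi, iff_false]; omega
        rw [this, h]; rfl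
      · rw [if_neg h, mul_zero, card_eq_zero, filter_eq_empty_iff]
        intro i _
        rw [hcomm]
        have := hsing (x ∆ c) i
        split_ifs at this with hi <;> omega
    rw [sum_congr rfl h2, ← mul_sum, ← card_filter]
    rfl
  refine ⟨#{i : α | N C (x ∆ {i}) 3 ≠ 0}, ?_, ?_⟩
  · calc _ ≤ #(univ : Finset α) := card_filter_le _ _
      _ = 16 := by rw [card_univ, hG.card]
  · rw [← h1, card_filter, sum_mul]
    apply sum_congr rfl
    intro i _
    by_cases h : N C (x ∆ {i}) 3 = 0
    · simp [h]
    · rw [if_pos h, one_mul]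
      have hD3 : IsD C 3 (x ∆ {i}) := by
        constructor
        · unfold N at h
          rw [← Ne, ← Nat.pos_iff_ne_zero, card_pos] at h
          obtain ⟨c, hc⟩ := h
          rw [mem_filter] at hc
          exact ⟨c, hc⟩
        · intro c hc
          have h4 := hD.2 c hc
          rw [hcomm]
          have := hsing (x ∆ c) i
          split_ifs at this with hi <;> omega
      obtain ⟨T, hT⟩ := exists_card_eq hG 3 (by norm_num)
      have hDT : IsD C 3 T := hT ▸ isD_small hG h0 hT.le
      rw [hG.reg 3 _ T hD3 hDT 3, N3_3 hG h0 hT, hl T hT]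

/-- the local structure around a codeword -/
structure Loc (C : Finset (Finset α)) : Prop where
  six : ∀ T : Finset α, #T = 3 → deg C 6 T = 4
  eight : ∀ T : Finset α, #T = 3 → deg C 8 T = 3
  eight4 : ∀ x : Finset α, #x = 4 → deg C 6 x = 0 → deg C 8 x = 3
  fourth : ∀ T : Finset α, #T = 3 → #{p ∈ Tᶜ | deg C 6 (insert p T) = 0} = 1

theorem loc (hG : Good C) (h0 : ∅ ∈ C) : Loc C := by
  obtain ⟨l, hlc, hl⟩ := lam_cases hG h0
  obtain ⟨P, hP⟩ := exists_card_eq hG 2 (by norm_num)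
  have hDP : IsD C 2 P := hP ▸ isD_small hG h0 (by omega)
  have hp := deg6_pair hG hl hP
  have hI : ∀ x : Finset α, #x = 4 → ¬ deg C 6 x = 0 → 2 * deg C 8 x + l = 6 := by
    intro x hx h
    have h1 := hG.reg 2 x P (isD2 hG h0 hx (Nat.pos_of_ne_zero h)) hDP 4
    rw [N2_4 hG h0 hP] at h1
    have h2 := N4_4 hG h0 hl hx
    have h3 := deg6_le hG hx
    omega
  obtain ⟨T0, hT0⟩ := exists_card_eq hG 3 (by norm_num)
  have hex : ∃ p ∈ T0ᶜ, deg C 6 (insert p T0) = 0 := by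
    have h1 := (uncovered hG hl hT0).1
    have h2 : 0 < #{p ∈ T0ᶜ | deg C 6 (insert p T0) = 0} := by
      rcases hlc with rfl | rfl <;> omega
    rw [card_pos] at h2
    obtain ⟨p, hp⟩ := h2
    exact ⟨p, by simpa using hp⟩
  obtain ⟨p0, hp0, hd0⟩ := hex
  have hx0 : #(insert p0 T0) = 4 := by rw [card_insert_of_notMem (by simpa using hp0), hT0]
  have hII : ∀ x : Finset α, #x = 4 → deg C 6 x = 0 → deg C 8 x = deg C 8 (insert p0 T0) := by
    intro x hx h
    have h1 := hG.reg 4 x _ (isD4 hG h0 hx h) (isD4 hG h0 hx0 hd0) 4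
    have h2 := N4_4 hG h0 hl hx
    have h3 := N4_4 hG h0 hl hx0
    omega
  obtain ⟨g, hg16, hg⟩ := N4_div hG h0 hl hx0 hd0
  have hN0 := N4_4 hG h0 hl hx0
  generalize deg C 8 (insert p0 T0) = w at *
  have h8 : ∀ T : Finset α, #T = 3 → 2 * (5 * deg C 8 T) = (3 * l) * (6 - l) + 2 * ((13 - 3 * l) * w) := by
    intro T hT
    have h1 := double C 8 T
    have hu := uncovered hG hl hT
    rw [← sum_filter_add_sum_filter_not _ (fun p => deg C 6 (insert p T) = 0)] at h1
    have hcard : ∀ p ∈ Tᶜ, #(insert p T) = 4 := fun p hp => by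
      rw [card_insert_of_notMem (by simpa using hp), hT]
    rw [sum_congr (s₁ := {p ∈ Tᶜ | deg C 6 (insert p T) = 0}) rfl (g := fun _ => w),
      sum_congr (s₁ := {p ∈ Tᶜ | ¬ deg C 6 (insert p T) = 0}) rfl (g := fun _ => (6 - l) / 2),
      sum_const, sum_const, smul_eq_mul, smul_eq_mul, hu.2, hT] at h1
    · have : #{p ∈ Tᶜ | deg C 6 (insert p T) = 0} = 13 - 3 * l := by omega
      rw [this] at h1
      rcases hlc with rfl | rfl <;> omega
    · intro p hp
      rw [mem_filter] at hp
      have := hI _ (hcard p hp.1) hp.2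
      omega
    · intro p hp
      rw [mem_filter] at hp
      exact hII _ (hcard p hp.1) hp.2
  have h80 := h8 T0 hT0
  have hl4 : l = 4 ∧ w = 3 := by
    rcases hlc with rfl | rfl <;> omega
  obtain ⟨rfl, rfl⟩ := hl4
  refine ⟨hl, fun T hT => ?_, hII, fun T hT => ?_⟩
  · have := h8 T hT; omega
  · have := uncovered hG hl hT; omega

end general
end NR

namespace NR
set_option linter.unusedSectionVars false
set_option linter.unusedVariables false
open Finset
open scoped symmDiff

section blocks
variable {α : Type} [Fintype α] [DecidableEq α] {C : Finset (Finset α)}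

/-- the quadruples not covered by a hexad -/
def Blk (C : Finset (Finset α)) (a b c d : α) : Prop :=
  a ≠ b ∧ a ≠ c ∧ a ≠ d ∧ b ≠ c ∧ b ≠ d ∧ c ≠ d ∧ deg C 6 {a, b, c, d} = 0

lemma Blk.swap {a b c d : α} (h : Blk C a b c d) : Blk C b a c d := by
  obtain ⟨h1, h2, h3, h4, h5, h6, h7⟩ := h
  refine ⟨h1.symm, h4, h5, h2, h3, h6, ?_⟩
  rw [← h7]; congr 1; ext; simp; tauto

lemma Blk.rot {a b c d : α} (h : Blk C a b c d) : Blk C b c d a := by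
  obtain ⟨h1, h2, h3, h4, h5, h6, h7⟩ := h
  refine ⟨h4, h5, h1.symm, h6, h2.symm, h3.symm, ?_⟩
  rw [← h7]; congr 1; ext; simp; tauto

lemma Blk.sw34 {a b c d : α} (h : Blk C a b c d) : Blk C a b d c := h.rot.rot.swap.rot.rot

lemma card3 {a b c : α} (h1 : a ≠ b) (h2 : a ≠ c) (h3 : b ≠ c) : #({a, b, c} : Finset α) = 3 := by
  simp [card_insert_of_notMem, *]

lemma card4 {a b c d : α} (h : Blk C a b c d) : #({a, b, c, d} : Finset α) = 4 := by
  obtain ⟨h1, h2, h3, h4, h5, h6, h7⟩ := h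
  simp [card_insert_of_notMem, *]

lemma ins4 (a b c d : α) : insert d ({a, b, c} : Finset α) = {a, b, c, d} := by
  ext; simp; tauto

lemma blk_exists (L : Loc C) {a b c : α} (h1 : a ≠ b) (h2 : a ≠ c) (h3 : b ≠ c) :
    ∃ d, Blk C a b c d := by
  have h := L.fourth {a, b, c} (card3 h1 h2 h3)
  obtain ⟨d, hd⟩ := card_pos.mp (h ▸ Nat.one_pos)
  rw [mem_filter, ins4] at hd
  obtain ⟨hd, h7⟩ := hd
  simp only [mem_compl, Finset.mem_insert, Finset.mem_singleton, not_or] at hd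
  exact ⟨d, h1, h2, Ne.symm hd.1, h3, Ne.symm hd.2.1, Ne.symm hd.2.2, h7⟩

lemma blk_unique (L : Loc C) {a b c d d' : α} (h : Blk C a b c d) (h' : Blk C a b c d') :
    d = d' := by
  obtain ⟨h1, h2, h3, h4, h5, h6, h7⟩ := h
  obtain ⟨-, -, h3', -, h5', h6', h7'⟩ := h'
  have h := L.fourth {a, b, c} (card3 h1 h2 h4)
  rw [card_eq_one] at h
  obtain ⟨e, he⟩ := h
  have hd : d ∈ ({e} : Finset α) := by
    rw [← he, mem_filter, ins4]; simp [*, h3.symm, h5.symm, h6.symm]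
  have hd' : d' ∈ ({e} : Finset α) := by
    rw [← he, mem_filter, ins4]; simp [*, h3'.symm, h5'.symm, h6'.symm]
  rw [Finset.mem_singleton] at hd hd'
  rw [hd, hd']

lemma octad_closed (L : Loc C) {W : Finset α} (hW : W ∈ C) (h8 : #W = 8) {a b c d : α}
    (ha : a ∈ W) (hb : b ∈ W) (hc : c ∈ W) (h : Blk C a b c d) : d ∈ W := by
  have e1 := L.eight4 _ (card4 h) h.2.2.2.2.2.2
  have e2 := L.eight _ (card3 h.1 h.2.1 h.2.2.2.1)
  unfold deg at e1 e2
  have hsub : ({w ∈ C | #w = 8 ∧ {a, b, c, d} ⊆ w} : Finset _) ⊆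
      ({w ∈ C | #w = 8 ∧ {a, b, c} ⊆ w} : Finset _) := by
    intro w hw
    simp only [mem_filter, Finset.insert_subset_iff, Finset.singleton_subset_iff] at hw ⊢
    tauto
  have heq := eq_of_subset_of_card_le hsub (by omega)
  have hm : W ∈ ({w ∈ C | #w = 8 ∧ {a, b, c} ⊆ w} : Finset _) := by
    simp [Finset.insert_subset_iff, *]
  rw [← heq] at hm
  simp only [mem_filter, Finset.insert_subset_iff, Finset.singleton_subset_iff] at hm
  tauto

lemma octad_unique (hG : Good C) (L : Loc C) {a b c d p : α} (h : Blk C a b c d)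
    (hp : p ∉ ({a, b, c, d} : Finset α)) :
    deg C 8 (insert p {a, b, c, d}) ≤ 1 := by
  unfold deg
  rw [card_le_one]
  intro V hV W hW
  simp only [mem_filter, Finset.insert_subset_iff, Finset.singleton_subset_iff] at hV hW
  by_contra hne
  have h1 := meet hG hV.1 hW.1 hne
  simp only [Finset.mem_insert, Finset.mem_singleton, not_or] at hp
  obtain ⟨e, he⟩ := blk_exists L h.1 (Ne.symm hp.1) (Ne.symm hp.2.1)
  have e1 : e ∈ V := octad_closed L hV.1 hV.2.1 hV.2.2.2.1 hV.2.2.2.2.1 hV.2.2.1 he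
  have e2 : e ∈ W := octad_closed L hW.1 hW.2.1 hW.2.2.2.1 hW.2.2.2.2.1 hW.2.2.1 he
  have hec : e ≠ c := by
    rintro rfl
    have : Blk C a b e p := he.sw34
    exact hp.2.2.2 (blk_unique L this h)
  have hed : e ≠ d := by
    rintro rfl
    have t1 : Blk C a b e p := he.sw34
    have t2 : Blk C a b e c := h.sw34
    exact hp.2.2.1 (blk_unique L t1 t2)
  have h6 : #({e, p, a, b, c, d} : Finset α) = 6 := by
    have := card4 h
    rw [card_insert_of_notMem, card_insert_of_notMem, this]
    · simp [hp]
    · simp [hec, hed, he.2.2.1.symm, he.2.2.2.2.1.symm, he.2.2.2.2.2.1.symm]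
  have hs : ({e, p, a, b, c, d} : Finset α) ⊆ V ∩ W := by
    simp only [Finset.insert_subset_iff, Finset.singleton_subset_iff, Finset.mem_inter]
    tauto
  have := card_le_card hs
  omega

lemma octad_exists (hG : Good C) (L : Loc C) {a b c d p : α} (h : Blk C a b c d)
    (hp : p ∉ ({a, b, c, d} : Finset α)) :
    ∃ W ∈ C, #W = 8 ∧ a ∈ W ∧ b ∈ W ∧ c ∈ W ∧ d ∈ W ∧ p ∈ W := by
  have hpos : 0 < deg C 8 (insert p {a, b, c, d}) := by
    by_contra hz
    have h1 := double C 8 ({a, b, c, d} : Finset α)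
    rw [L.eight4 _ (card4 h) h.2.2.2.2.2.2, card4 h] at h1
    have hlt : ∑ p ∈ ({a, b, c, d} : Finset α)ᶜ, deg C 8 (insert p {a, b, c, d}) <
        ∑ p ∈ ({a, b, c, d} : Finset α)ᶜ, 1 := by
      apply sum_lt_sum
      · intro q hq
        exact octad_unique hG L h (by simpa using hq)
      · exact ⟨p, by simpa using hp, by omega⟩
    rw [sum_const, card_compl' hG, card4 h, h1] at hlt
    simp at hlt
  obtain ⟨W, hW, h8, hs⟩ := of_deg_pos hpos
  simp only [Finset.insert_subset_iff, Finset.singleton_subset_iff] at hs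
  exact ⟨W, hW, h8, by tauto⟩

lemma blk_share (L : Loc C) {a b c d a' b' c' d' : α} (h : Blk C a b c d)
    (h' : Blk C a' b' c' d') (ha : a' ∈ ({a, b, c, d} : Finset α))
    (hb : b' ∈ ({a, b, c, d} : Finset α)) (hc : c' ∈ ({a, b, c, d} : Finset α)) :
    d' ∈ ({a, b, c, d} : Finset α) := by
  have hT := card3 h'.1 h'.2.1 h'.2.2.2.1
  have hsub : ({a', b', c'} : Finset α) ⊆ {a, b, c, d} := by
    intro t; simp only [Finset.mem_insert, Finset.mem_singleton] at *; rintro (rfl | rfl | rfl) <;> assumption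
  have h4 := card4 h
  have h1 : #(({a, b, c, d} : Finset α) \ {a', b', c'}) = 1 := by
    rw [card_sdiff_of_subset hsub]; omega
  obtain ⟨z, hz⟩ := card_eq_one.mp h1
  have hzm : z ∈ ({a, b, c, d} : Finset α) \ {a', b', c'} := by rw [hz]; simp
  rw [Finset.mem_sdiff] at hzm
  have hins : insert z ({a', b', c'} : Finset α) = {a, b, c, d} := by
    apply eq_of_subset_of_card_le
    · exact Finset.insert_subset hzm.1 hsub
    · rw [card_insert_of_notMem hzm.2]; omega
  have hB : Blk C a' b' c' z := by
    have := hzm.2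
    simp only [Finset.mem_insert, Finset.mem_singleton, not_or] at this
    refine ⟨h'.1, h'.2.1, Ne.symm this.1, h'.2.2.2.1, Ne.symm this.2.1, Ne.symm this.2.2, ?_⟩
    rw [← ins4, hins]; exact h.2.2.2.2.2.2
  rw [blk_unique L h' hB]
  exact hzm.1

/-- symmetric difference of two blocks sharing two points -/
lemma blk_K (hG : Good C) (L : Loc C) {a b c d e f : α} (h1 : Blk C a b c d)
    (h2 : Blk C a b e f) (hce : c ≠ e) (hcf : c ≠ f) : Blk C c d e f := by
  have U := @blk_unique _ _ _ C L
  have hde : d ≠ e := by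
    rintro rfl
    exact hcf (U h1.sw34 h2)
  have hdf : d ≠ f := by
    rintro rfl
    exact hce (U h1.sw34 h2.sw34)
  obtain ⟨W, hW, h8, aW, bW, cW, dW, eW⟩ := octad_exists hG L h1 (p := e)
    (by simp [h2.2.1.symm, h2.2.2.2.1.symm, hce.symm, hde.symm])
  have Cl := @octad_closed _ _ _ C L W hW h8
  have fW := Cl aW bW eW h2
  obtain ⟨g, hg⟩ := blk_exists L h1.2.2.2.2.2.1 hce hde
  by_cases hgf : g = f
  · rw [← hgf]; exact hg
  exfalso
  have gW := Cl cW dW eW hg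
  have S := @blk_share _ _ _ C L
  have hga : g ≠ a := by
    rintro rfl; have := S h1 hg.sw34 (by simp) (by simp) (by simp)
    simp [hce.symm, hde.symm, h2.2.2.2.1.symm, h2.2.1.symm] at this
  have hgb : g ≠ b := by
    rintro rfl; have := S h1 hg.sw34 (by simp) (by simp) (by simp)
    simp [hce.symm, hde.symm, h2.2.2.2.1.symm, h2.2.1.symm] at this
  obtain ⟨y, hy⟩ := blk_exists L h1.2.1 h2.2.1 hce
  obtain ⟨z, hz⟩ := blk_exists L h1.2.2.1 h2.2.1 hde
  have yW := Cl aW cW eW hy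
  have zW := Cl aW dW eW hz
  obtain ⟨n1, n2, n3, n4, n5, n6, -⟩ := id h1
  obtain ⟨-, m2, m3, m4, m5, m6, -⟩ := id h2
  obtain ⟨-, -, k3, -, k5, k6, -⟩ := id hg
  obtain ⟨-, -, y3, -, y5, y6, -⟩ := id hy
  obtain ⟨-, -, z3, -, z5, z6, -⟩ := id hz
  have yb : y ≠ b := by
    rintro rfl; have := S h1 hy.sw34 (by simp) (by simp) (by simp)
    simp [hce.symm, hde.symm, m2.symm, m4.symm] at this
  have zb : z ≠ b := by
    rintro rfl; have := S h1 hz.sw34 (by simp) (by simp) (by simp)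
    simp [hce.symm, hde.symm, m2.symm, m4.symm] at this
  have yd : y ≠ d := by
    rintro rfl; have := S h1 hy.sw34 (by simp) (by simp) (by simp)
    simp [hce.symm, hde.symm, m2.symm, m4.symm] at this
  have zc : z ≠ c := by
    rintro rfl; have := S h1 hz.sw34 (by simp) (by simp) (by simp)
    simp [hce.symm, hde.symm, m2.symm, m4.symm] at this
  have yf : y ≠ f := by
    rintro rfl; have := S h2 hy.swap.rot (by simp) (by simp) (by simp)
    simp [hce, hcf, n2.symm, n4.symm] at this
  have zf : z ≠ f := by
    rintro rfl; have := S h2 hz.swap.rot (by simp) (by simp) (by simp)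
    simp [hde, hdf, n3.symm, n5.symm] at this
  have yg : y ≠ g := by
    rintro rfl; have := S hg hy.rot (by simp) (by simp) (by simp)
    simp [n2, n3, m2, y3] at this
  have zg : z ≠ g := by
    rintro rfl; have := S hg hz.rot (by simp) (by simp) (by simp)
    simp [n2, n3, m2, z3] at this
  have hyz : y ≠ z := by
    rintro rfl
    have := S hy hz.swap.rot (by simp) (by simp) (by simp)
    simp [n3.symm, n6.symm, hde, yd.symm] at this
  have hs : ({a, b, c, d, e, f, g, y, z} : Finset α) ⊆ W := by
    simp only [Finset.insert_subset_iff, Finset.singleton_subset_iff]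
    tauto
  have h9 : #({a, b, c, d, e, f, g, y, z} : Finset α) = 9 := by
    simp [card_insert_of_notMem, n1, n2, n3, n4, n5, n6, m2, m3, m4, m5, m6, k3, k5, k6, y3, y5, y6,
      z3, z5, z6, yb.symm, yd.symm, yf.symm, yg.symm, zb.symm, zc.symm, zf.symm, zg.symm, hyz, hga.symm,
      hgb.symm, hce, hcf, hde, hdf, Ne.symm hgf]
  have := card_le_card hs
  omega
end blocks
end NR

namespace NR
set_option linter.unusedSectionVars false
set_option linter.unusedVariables false
open Finset
open scoped symmDiff

section grp
variable {α : Type} [Fintype α] [DecidableEq α] {C : Finset (Finset α)}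

/-- the relation `a + b + c + d = 0` -/
def Rl (C : Finset (Finset α)) (a b c d : α) : Prop :=
  Blk C a b c d ∨ (a = b ∧ c = d) ∨ (a = c ∧ b = d) ∨ (a = d ∧ b = c)

lemma Rl.swap {a b c d : α} (h : Rl C a b c d) : Rl C b a c d := by
  rcases h with h | ⟨rfl, rfl⟩ | ⟨rfl, rfl⟩ | ⟨rfl, rfl⟩
  · exact Or.inl h.swap
  all_goals simp [Rl]

lemma Rl.rot {a b c d : α} (h : Rl C a b c d) : Rl C b c d a := by
  rcases h with h | ⟨rfl, rfl⟩ | ⟨rfl, rfl⟩ | ⟨rfl, rfl⟩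
  · exact Or.inl h.rot
  all_goals simp [Rl]

lemma Rl.flip {a b c d : α} (h : Rl C a b c d) : Rl C c d a b := h.rot.rot

lemma Rl.sw23 {a b c d : α} (h : Rl C a b c d) : Rl C a c b d := h.rot.swap.rot.rot.rot

lemma Rl.sw34 {a b c d : α} (h : Rl C a b c d) : Rl C a b d c := h.rot.rot.swap.rot.rot

lemma Rl.ex (L : Loc C) (a b c : α) : ∃ d, Rl C a b c d := by
  by_cases h1 : a = b
  · exact ⟨c, by simp [Rl, h1]⟩
  by_cases h2 : a = c
  · exact ⟨b, by simp [Rl, h2]⟩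
  by_cases h3 : b = c
  · exact ⟨a, by simp [Rl, h3]⟩
  obtain ⟨d, hd⟩ := blk_exists L h1 h2 h3
  exact ⟨d, Or.inl hd⟩

lemma Rl.uniq (L : Loc C) {a b c d e : α} (h : Rl C a b c d) (h' : Rl C a b c e) : d = e := by
  rcases h with h | ⟨rfl, rfl⟩ | ⟨rfl, rfl⟩ | ⟨rfl, rfl⟩ <;>
  rcases h' with h' | ⟨h1, h2⟩ | ⟨h1, h2⟩ | ⟨h1, h2⟩
  · exact blk_unique L h h'
  · exact absurd h1 h.1
  · exact absurd h1 h.2.1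
  · exact absurd h2 h.2.2.2.1
  · exact absurd rfl h'.1
  · exact h2
  · rw [← h2, h1]
  · rw [← h1, h2]
  · exact absurd rfl h'.2.1
  · rw [← h1, h2]
  · exact h2
  · rw [← h1, h2]
  · exact absurd rfl h'.2.2.2.1
  · rw [← h2, h1]
  · rw [← h2, h1]
  · exact h1

lemma Rl.K (hG : Good C) (L : Loc C) {a b c d e f : α} (h : Rl C a b c d) (h' : Rl C a b e f) :
    Rl C c d e f := by
  rcases h with h | ⟨rfl, rfl⟩ | ⟨rfl, rfl⟩ | ⟨rfl, rfl⟩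
  · rcases h' with h' | ⟨rfl, rfl⟩ | ⟨rfl, rfl⟩ | ⟨rfl, rfl⟩
    · by_cases h1 : c = e
      · subst h1
        have := blk_unique L h h'
        subst this
        simp [Rl]
      by_cases h2 : c = f
      · subst h2
        have := blk_unique L h h'.sw34
        subst this
        simp [Rl]
      exact Or.inl (blk_K hG L h h' h1 h2)
    · exact absurd rfl h.1
    · exact Or.inl h.rot.rot
    · exact Or.inl h.rot.rot.sw34
  · rcases h' with h' | ⟨-, rfl⟩ | ⟨rfl, rfl⟩ | ⟨rfl, rfl⟩
    · exact absurd rfl h'.1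
    all_goals simp [Rl]
  · exact h'
  · exact h'.swap

lemma octad_Rl (L : Loc C) {W : Finset α} (hW : W ∈ C) (h8 : #W = 8) {a b c d : α}
    (ha : a ∈ W) (hb : b ∈ W) (hc : c ∈ W) (h : Rl C a b c d) : d ∈ W := by
  rcases h with h | ⟨rfl, rfl⟩ | ⟨rfl, rfl⟩ | ⟨rfl, rfl⟩
  · exact octad_closed L hW h8 ha hb hc h
  all_goals assumption

/-- addition with origin `o` -/
noncomputable def tsum3 (L : Loc C) (o a b : α) : α := (Rl.ex L o a b).choose

lemma tsum3_spec (L : Loc C) (o a b : α) : Rl C o a b (tsum3 L o a b) := (Rl.ex L o a b).choose_spec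

/-- the group structure with origin `o` -/
@[reducible] noncomputable def grp (hG : Good C) (L : Loc C) (o : α) : AddCommGroup α where
  add := tsum3 L o
  zero := o
  neg := id
  nsmul := @nsmulRec α ⟨o⟩ ⟨tsum3 L o⟩
  zsmul := @zsmulRec α ⟨o⟩ ⟨tsum3 L o⟩ ⟨id⟩ (@nsmulRec α ⟨o⟩ ⟨tsum3 L o⟩)
  add_assoc a b c := by
    change tsum3 L o (tsum3 L o a b) c = tsum3 L o a (tsum3 L o b c)
    have h1 := tsum3_spec L o a b
    have h2 := tsum3_spec L o b c
    have h3 := tsum3_spec L o (tsum3 L o a b) c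
    generalize tsum3 L o a b = ab at *
    generalize tsum3 L o b c = bc at *
    have h4 := tsum3_spec L o a bc
    generalize tsum3 L o a bc = abc at *
    have k2 := Rl.K hG L h1.sw23 h2
    have r := Rl.K hG L k2.swap.sw23 h3.rot.sw34
    exact Rl.uniq L r.sw34.rot.rot.rot h4
  zero_add a := by
    change tsum3 L o o a = a
    exact (Rl.uniq L (tsum3_spec L o o a) (by simp [Rl]))
  add_zero a := by
    change tsum3 L o a o = a
    exact (Rl.uniq L (tsum3_spec L o a o) (by simp [Rl]))
  neg_add_cancel a := by
    change tsum3 L o a a = o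
    exact (Rl.uniq L (tsum3_spec L o a a) (by simp [Rl]))
  add_comm a b := by
    change tsum3 L o a b = tsum3 L o b a
    exact (Rl.uniq L (tsum3_spec L o a b) (tsum3_spec L o b a).rot.swap.rot.rot.rot)

lemma grp_Rl (hG : Good C) (L : Loc C) (o a b c d : α) :
    letI := grp hG L o
    Rl C a b c d ↔ a + b + c + d = 0 := by
  letI := grp hG L o
  have hself : ∀ a : α, a + a = 0 := fun a => neg_add_cancel a
  have h1 : Rl C o a b (a + b) := tsum3_spec L o a b
  have h2 : Rl C o (a + b) c (a + b + c) := tsum3_spec L o (a + b) c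
  -- o,ab | a b ; o,ab | c abc
  have h3 : Rl C a b c (a + b + c) := Rl.K hG L (h1.rot.rot.rot.swap) h2
  constructor
  · intro h
    rw [Rl.uniq L h h3]
    exact hself _
  · intro h
    have : d = a + b + c := by
      have := hself d
      rw [← h] at this
      exact add_right_cancel this
    rw [this]
    exact h3

/-- translation by `p + q` -/
noncomputable def tr (L : Loc C) (p q a : α) : α := (Rl.ex L p q a).choose

lemma tr_spec (L : Loc C) (p q a : α) : Rl C p q a (tr L p q a) := (Rl.ex L p q a).choose_spec

lemma tr_inj (L : Loc C) (p q : α) : Function.Injective (tr L p q) := by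
  intro a b h
  have h1 := tr_spec L p q a
  have h2 := tr_spec L p q b
  rw [h] at h1
  exact Rl.uniq L h1.sw34 h2.sw34

/-- closed under the ternary sum -/
def Cl (C : Finset (Finset α)) (U : Finset α) : Prop :=
  ∀ a b c d, a ∈ U → b ∈ U → c ∈ U → Rl C a b c d → d ∈ U

lemma octad_Cl (L : Loc C) {W : Finset α} (hW : W ∈ C) (h8 : #W = 8) : Cl C W :=
  fun _ _ _ _ ha hb hc h => octad_Rl L hW h8 ha hb hc h

lemma closed_octad (hG : Good C) (L : Loc C) {U : Finset α} (h8 : #U = 8) (hU : Cl C U) :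
    U ∈ C := by
  obtain ⟨T, hTU, hT⟩ := exists_subset_card_eq (show 3 ≤ #U by omega)
  obtain ⟨a, b, c, h1, h2, h3, rfl⟩ := card_eq_three.mp hT
  simp only [Finset.insert_subset_iff, Finset.singleton_subset_iff] at hTU
  obtain ⟨aU, bU, cU⟩ := hTU
  obtain ⟨d, hd⟩ := blk_exists L h1 h2 h3
  have dU := hU a b c d aU bU cU (Or.inl hd)
  have h4 := card4 hd
  obtain ⟨p, pU, hp⟩ : ∃ p ∈ U, p ∉ ({a, b, c, d} : Finset α) := by
    apply exists_mem_notMem_of_card_lt_card; omega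
  obtain ⟨W, hW, hW8, aW, bW, cW, dW, pW⟩ := octad_exists hG L hd hp
  have hs : insert p ({a, b, c, d} : Finset α) ⊆ U ∩ W := by
    simp only [Finset.insert_subset_iff, Finset.singleton_subset_iff, Finset.mem_inter]
    tauto
  have h5 := card_le_card hs
  rw [card_insert_of_notMem hp, h4] at h5
  have : W ⊆ U := by
    intro q qW
    by_contra qU
    have hi : #((U ∩ W).image (tr L p q)) ≤ #(W \ U) := by
      apply card_le_card
      intro z hz
      rw [Finset.mem_image] at hz
      obtain ⟨y, hy, rfl⟩ := hz
      rw [Finset.mem_inter] at hy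
      have t := tr_spec L p q y
      rw [Finset.mem_sdiff]
      refine ⟨octad_Rl L hW hW8 pW qW hy.2 t, fun hz => qU ?_⟩
      exact hU _ _ _ _ pU hy.1 hz t.sw23.sw34
    rw [card_image_of_injective _ (tr_inj L p q)] at hi
    have := card_sdiff_add_card_inter W U
    rw [Finset.inter_comm] at this
    omega
  rw [← eq_of_subset_of_card_le this (by omega)]
  exact hW

lemma compl_Cl (hG : Good C) (L : Loc C) {W : Finset α} (h8 : #W = 8) (hW : Cl C W) :
    Cl C Wᶜ := by
  intro x y z d hx hy hz h
  rw [Finset.mem_compl] at *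
  intro hd
  have hi : W.image (tr L x d) = Wᶜ := by
    apply eq_of_subset_of_card_le
    · intro u hu
      rw [Finset.mem_image] at hu
      obtain ⟨w, hw, rfl⟩ := hu
      have t := tr_spec L x d w
      rw [Finset.mem_compl]
      intro hu
      exact hx (hW _ _ _ _ hd hw hu t.rot)
    · rw [card_image_of_injective _ (tr_inj L x d), card_compl' hG]; omega
  have hy' : y ∈ W.image (tr L x d) := by rw [hi]; simpa using hy
  rw [Finset.mem_image] at hy'
  obtain ⟨w, hw, hwy⟩ := hy'
  have t := tr_spec L x d w
  rw [hwy] at t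
  -- x d w y ; x y z d
  have : w = z := Rl.uniq L t.sw34.sw23 h.sw34
  rw [this] at hw
  exact hz hw

lemma octad_compl (hG : Good C) (L : Loc C) {W : Finset α} (hW : W ∈ C) (h8 : #W = 8) :
    Wᶜ ∈ C := by
  apply closed_octad hG L
  · rw [card_compl' hG]; omega
  · exact compl_Cl hG L h8 (octad_Cl L hW h8)

end grp
end NR

namespace NR
set_option linter.unusedSectionVars false
set_option linter.unusedVariables false
open Finset
open scoped symmDiff

section transl
variable {α : Type} [Fintype α] [DecidableEq α] {C : Finset (Finset α)}

/-- translate of a code -/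
def sh (C : Finset (Finset α)) (w : Finset α) : Finset (Finset α) := C.image (· ∆ w)

lemma mem_sh {w x : Finset α} : x ∈ sh C w ↔ x ∆ w ∈ C := by
  unfold sh
  rw [Finset.mem_image]
  constructor
  · rintro ⟨c, hc, rfl⟩
    rwa [symmDiff_symmDiff_cancel_right]
  · intro h
    exact ⟨_, h, symmDiff_symmDiff_cancel_right _ _⟩

lemma sd_sd (x c w : Finset α) : (x ∆ w) ∆ (c ∆ w) = x ∆ c := by
  rw [symmDiff_symmDiff_symmDiff_comm, symmDiff_self]; exact symmDiff_bot _

lemma sd_inj {x c w : Finset α} (h : x ∆ w = c ∆ w) : x = c := by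
  rw [← symmDiff_symmDiff_cancel_right w x, h, symmDiff_symmDiff_cancel_right]

lemma N_sh (w x : Finset α) (k : ℕ) : N (sh C w) x k = N C (x ∆ w) k := by
  unfold N
  symm
  apply card_bij (fun c _ => c ∆ w)
  · intro c hc
    rw [mem_filter] at hc ⊢
    rw [mem_sh, symmDiff_symmDiff_cancel_right]
    refine ⟨hc.1, ?_⟩
    rw [← sd_sd _ _ w, symmDiff_symmDiff_cancel_right]; exact hc.2
  · intro a _ b _ h
    exact sd_inj h
  · intro b hb
    rw [mem_filter, mem_sh] at hb
    refine ⟨b ∆ w, ?_, symmDiff_symmDiff_cancel_right _ _⟩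
    rw [mem_filter, sd_sd]
    exact hb

lemma isD_sh (w x : Finset α) (i : ℕ) (h : IsD (sh C w) i x) : IsD C i (x ∆ w) := by
  obtain ⟨⟨c, hc, h1⟩, h2⟩ := h
  rw [mem_sh] at hc
  refine ⟨⟨_, hc, by rw [sd_sd]; exact h1⟩, ?_⟩
  intro c hc
  have := h2 (c ∆ w) (by rw [mem_sh, symmDiff_symmDiff_cancel_right]; exact hc)
  rwa [← sd_sd _ _ w, symmDiff_symmDiff_cancel_right] at this

lemma good_sh (hG : Good C) (w : Finset α) : Good (sh C w) where
  card := hG.card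
  reg := by
    intro i x y hx hy k
    rw [N_sh, N_sh]
    exact hG.reg i _ _ (isD_sh _ _ _ hx) (isD_sh _ _ _ hy) k
  dist := by
    intro c hc c' hc' hne
    rw [mem_sh] at hc hc'
    rw [← sd_sd _ _ w]
    exact hG.dist _ hc _ hc' (fun h => hne (sd_inj h))
  ex := by
    obtain ⟨c, hc, c', hc', hne, h⟩ := hG.ex
    refine ⟨c ∆ w, ?_, c' ∆ w, ?_, fun h => hne (sd_inj h), by rw [sd_sd]; exact h⟩
    · rwa [mem_sh, symmDiff_symmDiff_cancel_right]
    · rwa [mem_sh, symmDiff_symmDiff_cancel_right]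

lemma empty_sh {w : Finset α} (hw : w ∈ C) : ∅ ∈ sh C w := by
  rw [mem_sh]
  have : (∅ : Finset α) ∆ w = w := bot_symmDiff w
  rwa [this]

lemma univ_mem (hG : Good C) (h0 : ∅ ∈ C) : univ ∈ C := by
  have L := loc hG h0
  obtain ⟨T, hT⟩ := exists_card_eq hG 3 (by norm_num)
  obtain ⟨W, hW, h8, -⟩ := of_deg_pos (show 0 < deg C 8 T by rw [L.eight T hT]; norm_num)
  have hG' := good_sh hG W
  have L' := loc hG' (empty_sh hW)
  have hW' : W ∈ sh C W := by rw [mem_sh, symmDiff_self]; exact h0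
  have := octad_compl hG' L' hW' h8
  rw [mem_sh] at this
  have e : Wᶜ ∆ W = univ := compl_symmDiff_self W
  rwa [e] at this

lemma compl_mem (hG : Good C) (h0 : ∅ ∈ C) {c : Finset α} (hc : c ∈ C) : cᶜ ∈ C := by
  have := univ_mem (good_sh hG c) (empty_sh hc)
  rw [mem_sh] at this
  have e : (univ : Finset α) ∆ c = cᶜ := top_symmDiff c
  rwa [e] at this

lemma compl_mem_iff (hG : Good C) (h0 : ∅ ∈ C) {c : Finset α} : cᶜ ∈ C ↔ c ∈ C := by
  constructor
  · intro h
    have := compl_mem hG h0 h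
    rwa [compl_compl] at this
  · exact compl_mem hG h0

lemma card_ne7 (hG : Good C) (h0 : ∅ ∈ C) {c : Finset α} (hc : c ∈ C) : #c ≠ 7 := by
  intro h
  obtain ⟨x, hx, h4⟩ := exists_subset_card_eq (show 4 ≤ #c by omega)
  have := deg_pos hc h hx
  have := no7 hG h0 h4
  omega

lemma no_blk (hG : Good C) (h0 : ∅ ∈ C) {h : Finset α} (hc : h ∈ C) (h6 : #h = 6) {a b c d : α}
    (ha : a ∈ h) (hb : b ∈ h) (hc' : c ∈ h) (hd : d ∈ h) : ¬ Blk C a b c d := by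
  intro hb'
  have := deg_pos hc h6 (x := {a, b, c, d}) (by
    simp only [Finset.insert_subset_iff, Finset.singleton_subset_iff]
    tauto)
  have := hb'.2.2.2.2.2.2
  omega

lemma mem_iff (hG : Good C) (h0 : ∅ ∈ C) (c : Finset α) :
    c ∈ C ↔ c = ∅ ∨ c = univ ∨ (#c = 6 ∧ c ∈ C) ∨ (#cᶜ = 6 ∧ cᶜ ∈ C) ∨ (#c = 8 ∧ Cl C c) := by
  have L := loc hG h0
  constructor
  · intro hc
    rcases wt hG h0 hc with h | h
    · exact Or.inl h
    right
    have hc' := compl_mem hG h0 hc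
    rcases wt hG h0 hc' with h' | h'
    · left
      rwa [compl_eq_empty_iff] at h'
    right
    have h1 := card_ne7 hG h0 hc
    have h2 := card_ne7 hG h0 hc'
    have h3 := card_compl' hG c
    by_cases h4 : #c = 6
    · exact Or.inl ⟨h4, hc⟩
    by_cases h5 : #cᶜ = 6
    · exact Or.inr (Or.inl ⟨h5, hc'⟩)
    have h8 : #c = 8 := by omega
    exact Or.inr (Or.inr ⟨h8, octad_Cl L hc h8⟩)
  · rintro (rfl | rfl | h | h | h)
    · exact h0
    · exact univ_mem hG h0
    · exact h.2
    · exact (compl_mem_iff hG h0).mp h.2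
    · exact closed_octad hG L h.1 h.2

end transl
end NR

namespace NR
set_option linter.unusedSectionVars false
set_option linter.unusedVariables false
open Finset
open scoped symmDiff

section coord

/-- the linear map with given values on powers of two -/
def lin {α : Type} [AddCommGroup α] (b1 b2 b3 b4 : α) (n : ℕ) : α :=
  ((if n.testBit 0 then b1 else 0) + (if n.testBit 1 then b2 else 0)) +
  ((if n.testBit 2 then b3 else 0) + (if n.testBit 3 then b4 else 0))

lemma lin_xor {α : Type} [AddCommGroup α] (h2 : ∀ a : α, a + a = 0) (b1 b2 b3 b4 : α) (m n : ℕ) :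
    lin b1 b2 b3 b4 (m ^^^ n) = lin b1 b2 b3 b4 m + lin b1 b2 b3 b4 n := by
  have key : ∀ (b : α) (x y : Bool), (if (x ^^ y) = true then b else 0) =
      (if x = true then b else 0) + (if y = true then b else 0) := by
    intro b x y
    cases x <;> cases y <;> simp [h2]
  unfold lin
  simp only [Nat.testBit_xor, key]
  abel

variable {α : Type} [Fintype α] [DecidableEq α] {C : Finset (Finset α)}

/-- `φ` is an affine coordinate system -/
def Co (C : Finset (Finset α)) (φ : Fin 16 ≃ α) : Prop :=
  ∀ i j k l : Fin 16, Rl C (φ i) (φ j) (φ k) (φ l) ↔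
    (i.val ^^^ j.val) ^^^ (k.val ^^^ l.val) = 0

set_option maxHeartbeats 2000000 in
lemma coord (hG : Good C) (h0 : ∅ ∈ C) {h : Finset α} (hh : h ∈ C) (h6 : #h = 6)
    {b0 b1 b2 b3 b4 b5 : α} (hs : ({b0, b1, b2, b3, b4, b5} : Finset α) ⊆ h)
    (hc : #({b0, b1, b2, b3, b4, b5} : Finset α) = 6) :
    ∃ φ : Fin 16 ≃ α, Co C φ ∧ φ 0 = b0 ∧ φ 1 = b1 ∧ φ 2 = b2 ∧ φ 4 = b3 ∧ φ 8 = b4 ∧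
      φ 15 = b5 := by
  have L := loc hG h0
  let _ := grp hG L b0
  have hself : ∀ a : α, a + a = 0 := fun a => neg_add_cancel a
  have R : ∀ a b c d : α, Rl C a b c d ↔ a + b + c + d = 0 := grp_Rl hG L b0
  have z : b0 = (0 : α) := rfl
  simp only [Finset.insert_subset_iff, Finset.singleton_subset_iff] at hs
  obtain ⟨m0, m1, m2, m3, m4, m5⟩ := hs
  have hne : (b0 ≠ b1 ∧ b0 ≠ b2 ∧ b0 ≠ b3 ∧ b0 ≠ b4 ∧ b0 ≠ b5) ∧ (b1 ≠ b2 ∧ b1 ≠ b3 ∧ b1 ≠ b4 ∧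
      b1 ≠ b5) ∧ (b2 ≠ b3 ∧ b2 ≠ b4 ∧ b2 ≠ b5) ∧ (b3 ≠ b4 ∧ b3 ≠ b5) ∧ b4 ≠ b5 := by
    have e : ∀ (a : α) (s : Finset α), #(insert a s) ≤ #s + 1 := fun a s => card_insert_le a s
    have e' : ∀ (a : α) (s : Finset α), a ∈ s → #(insert a s) = #s :=
      fun a s h => by rw [Finset.insert_eq_self.mpr h]
    have s1 : #({b5} : Finset α) = 1 := card_singleton _
    have s2 := e b4 {b5}
    have s3 := e b3 {b4, b5}
    have s4 := e b2 {b3, b4, b5}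
    have s5 := e b1 {b2, b3, b4, b5}
    have s6 := e b0 {b1, b2, b3, b4, b5}
    have t2 := e' b4 {b5}
    have t3 := e' b3 {b4, b5}
    have t4 := e' b2 {b3, b4, b5}
    have t5 := e' b1 {b2, b3, b4, b5}
    have t6 := e' b0 {b1, b2, b3, b4, b5}
    have u2 : b4 ∉ ({b5} : Finset α) := fun h => by have := t2 h; omega
    have u3 : b3 ∉ ({b4, b5} : Finset α) := fun h => by have := t3 h; omega
    have u4 : b2 ∉ ({b3, b4, b5} : Finset α) := fun h => by have := t4 h; omega
    have u5 : b1 ∉ ({b2, b3, b4, b5} : Finset α) := fun h => by have := t5 h; omega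
    have u6 : b0 ∉ ({b1, b2, b3, b4, b5} : Finset α) := fun h => by have := t6 h; omega
    simp only [Finset.mem_insert, Finset.mem_singleton, not_or] at u2 u3 u4 u5 u6
    exact ⟨u6, u5, u4, u3, u2⟩
  obtain ⟨⟨n01, n02, n03, n04, n05⟩, ⟨n12, n13, n14, n15⟩, ⟨n23, n24, n25⟩, ⟨n34, n35⟩, n45⟩ := hne
  -- no four distinct points of the hexad sum to zero
  have Q : ∀ a b c d : α, a ∈ h → b ∈ h → c ∈ h → d ∈ h → a ≠ b → a ≠ c → a ≠ d → b ≠ c → b ≠ d →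
      c ≠ d → a + b + c + d ≠ 0 := by
    intro a b c d ha hb hc hd k1 k2 k3 k4 k5 k6 hz
    rw [← R] at hz
    rcases hz with hz | hz | hz | hz
    · exact no_blk hG h0 hh h6 ha hb hc hd hz
    · exact k1 hz.1
    · exact k2 hz.1
    · exact k3 hz.1
  have Q3 : ∀ b c d : α, b ∈ h → c ∈ h → d ∈ h → b0 ≠ b → b0 ≠ c → b0 ≠ d → b ≠ c → b ≠ d →
      c ≠ d → b + c + d ≠ 0 := by
    intro b c d hb hc hd k1 k2 k3 k4 k5 k6 hz
    refine Q b0 b c d m0 hb hc hd k1 k2 k3 k4 k5 k6 ?_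
    rw [z, zero_add]; exact hz
  have Q2 : ∀ b c : α, b ≠ c → b + c ≠ 0 := by
    intro b c hbc hz
    rw [← hself c] at hz
    exact hbc (add_right_cancel hz)
  let f : ℕ → α := lin b1 b2 b3 b4
  have fx : ∀ m n, f (m ^^^ n) = f m + f n := lin_xor hself b1 b2 b3 b4
  have f0 : ∀ k < 16, f k = 0 → k = 0 := by
    intro k hk
    interval_cases k <;> simp only [f, lin] <;> norm_num [Nat.testBit, Nat.shiftRight_eq_div_pow]
    · exact n01.symm
    · exact n02.symm
    · exact Q2 _ _ n12
    · exact n03.symm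
    · exact Q2 _ _ n13
    · exact Q2 _ _ n23
    · exact Q3 _ _ _ m1 m2 m3 n01 n02 n03 n12 n13 n23
    · exact n04.symm
    · exact Q2 _ _ n14
    · exact Q2 _ _ n24
    · exact Q3 _ _ _ m1 m2 m4 n01 n02 n04 n12 n14 n24
    · exact Q2 _ _ n34
    · rw [← add_assoc]; exact Q3 _ _ _ m1 m3 m4 n01 n03 n04 n13 n14 n34
    · rw [← add_assoc]; exact Q3 _ _ _ m2 m3 m4 n02 n03 n04 n23 n24 n34
    · rw [← add_assoc]; exact Q _ _ _ _ m1 m2 m3 m4 n12 n13 n14 n23 n24 n34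
  have finj : Function.Injective (fun i : Fin 16 => f i) := by
    intro i j hij
    have h1 : f (i.val ^^^ j.val) = 0 := by rw [fx, show f i = f j from hij]; exact hself _
    have h2 := f0 _ (Nat.xor_lt_two_pow (n := 4) i.isLt j.isLt) h1
    exact Fin.ext (Nat.xor_eq_zero_iff.mp h2)
  have fbij : Function.Bijective (fun i : Fin 16 => f i) := by
    rw [Fintype.bijective_iff_injective_and_card]
    exact ⟨finj, by rw [hG.card]; simp⟩
  have g0 : f 0 = b0 := by simp [f, lin, z]
  have g1 : f 1 = b1 := by norm_num [f, lin, Nat.testBit, Nat.shiftRight_eq_div_pow]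
  have g2 : f 2 = b2 := by norm_num [f, lin, Nat.testBit, Nat.shiftRight_eq_div_pow]
  have g4 : f 4 = b3 := by norm_num [f, lin, Nat.testBit, Nat.shiftRight_eq_div_pow]
  have g8 : f 8 = b4 := by norm_num [f, lin, Nat.testBit, Nat.shiftRight_eq_div_pow]
  have g15 : f 15 = b5 := by
    obtain ⟨⟨k, hk⟩, hb⟩ := fbij.2 b5
    simp only at hb
    have hz : f k + b5 = 0 := by rw [hb]; exact hself _
    interval_cases k
    · exact absurd (g0.symm.trans hb) n05
    · exact absurd (g1.symm.trans hb) n15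
    · exact absurd (g2.symm.trans hb) n25
    · rw [show 3 = 1 ^^^ 2 from rfl, fx, g1, g2] at hz
      exact absurd hz (Q3 _ _ _ m1 m2 m5 n01 n02 n05 n12 n15 n25)
    · exact absurd (g4.symm.trans hb) n35
    · rw [show 5 = 1 ^^^ 4 from rfl, fx, g1, g4] at hz
      exact absurd hz (Q3 _ _ _ m1 m3 m5 n01 n03 n05 n13 n15 n35)
    · rw [show 6 = 2 ^^^ 4 from rfl, fx, g2, g4] at hz
      exact absurd hz (Q3 _ _ _ m2 m3 m5 n02 n03 n05 n23 n25 n35)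
    · rw [show 7 = 1 ^^^ 2 ^^^ 4 from rfl, fx, fx, g1, g2, g4] at hz
      exact absurd hz (Q _ _ _ _ m1 m2 m3 m5 n12 n13 n15 n23 n25 n35)
    · exact absurd (g8.symm.trans hb) n45
    · rw [show 9 = 1 ^^^ 8 from rfl, fx, g1, g8] at hz
      exact absurd hz (Q3 _ _ _ m1 m4 m5 n01 n04 n05 n14 n15 n45)
    · rw [show 10 = 2 ^^^ 8 from rfl, fx, g2, g8] at hz
      exact absurd hz (Q3 _ _ _ m2 m4 m5 n02 n04 n05 n24 n25 n45)
    · rw [show 11 = 1 ^^^ 2 ^^^ 8 from rfl, fx, fx, g1, g2, g8] at hz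
      exact absurd hz (Q _ _ _ _ m1 m2 m4 m5 n12 n14 n15 n24 n25 n45)
    · rw [show 12 = 4 ^^^ 8 from rfl, fx, g4, g8] at hz
      exact absurd hz (Q3 _ _ _ m3 m4 m5 n03 n04 n05 n34 n35 n45)
    · rw [show 13 = 1 ^^^ 4 ^^^ 8 from rfl, fx, fx, g1, g4, g8] at hz
      exact absurd hz (Q _ _ _ _ m1 m3 m4 m5 n13 n14 n15 n34 n35 n45)
    · rw [show 14 = 2 ^^^ 4 ^^^ 8 from rfl, fx, fx, g2, g4, g8] at hz
      exact absurd hz (Q _ _ _ _ m2 m3 m4 m5 n23 n24 n25 n34 n35 n45)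
    · exact hb
  refine ⟨Equiv.ofBijective _ fbij, ?_, g0, g1, g2, g4, g8, g15⟩
  intro i j k l
  rw [R]
  change f i + f j + f k + f l = 0 ↔ _
  rw [add_assoc, ← fx, ← fx, ← fx]
  constructor
  · intro hz
    exact f0 _ (Nat.xor_lt_two_pow (n := 4) (Nat.xor_lt_two_pow (n := 4) i.isLt j.isLt)
      (Nat.xor_lt_two_pow (n := 4) k.isLt l.isLt)) hz
  · intro hz
    rw [hz]; exact g0

lemma hexsum (hG : Good C) (h0 : ∅ ∈ C) {h : Finset α} (hh : h ∈ C) (h6 : #h = 6)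
    {b0 b1 b2 b3 b4 b5 : α} (hs : ({b0, b1, b2, b3, b4, b5} : Finset α) ⊆ h)
    (hc : #({b0, b1, b2, b3, b4, b5} : Finset α) = 6) :
    ∃ p, Rl C b0 b1 b2 p ∧ Rl C p b3 b4 b5 := by
  obtain ⟨φ, hφ, e0, e1, e2, e3, e4, e5⟩ := coord hG h0 hh h6 hs hc
  refine ⟨φ 3, ?_, ?_⟩
  · rw [← e0, ← e1, ← e2, hφ]; rfl
  · rw [← e3, ← e4, ← e5, hφ]; rfl

end coord
end NR

namespace NR
set_option linter.unusedSectionVars false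
set_option linter.unusedVariables false
open Finset
open scoped symmDiff

section cert

/-- number of ones among the first 16 bits -/
def pc (m : ℕ) : ℕ :=
  (m.testBit 0).toNat + (m.testBit 1).toNat + (m.testBit 2).toNat + (m.testBit 3).toNat +
  (m.testBit 4).toNat + (m.testBit 5).toNat + (m.testBit 6).toNat + (m.testBit 7).toNat +
  (m.testBit 8).toNat + (m.testBit 9).toNat + (m.testBit 10).toNat + (m.testBit 11).toNat +
  (m.testBit 12).toNat + (m.testBit 13).toNat + (m.testBit 14).toNat + (m.testBit 15).toNat

/-- bit mask of four points -/
def mk4 (i j k l : ℕ) : ℕ := 2 ^ i ||| 2 ^ j ||| 2 ^ k ||| 2 ^ l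

/-- the two remaining points of a hexad containing four given points -/
def mk6 (i j k l u : ℕ) : ℕ := mk4 i j k l ||| 2 ^ u ||| 2 ^ (i ^^^ j ^^^ k ^^^ l ^^^ u)

/-- properties of the hexads, in terms of bit masks -/
structure Hex (P : ℕ → Prop) : Prop where
  six : ∀ m, P m → pc m = 6
  far : ∀ m w, P m → P w → pc (w &&& m) ≠ 4 ∧ pc (w &&& m) ≠ 5
  cov : ∀ i j k l, i < 16 → j < 16 → k < 16 → l < 16 → pc (mk4 i j k l) = 4 →
    i ^^^ j ^^^ k ^^^ l ≠ 0 → ∃ u < 16, P (mk6 i j k l u)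

/-- check of one propagation step -/
def stepOK (K : List ℕ) (i j k l t : ℕ) (hs : List ℕ) : Bool :=
  Nat.blt i 16 && Nat.blt j 16 && Nat.blt k 16 && Nat.blt l 16 && Nat.beq (pc (mk4 i j k l)) 4 &&
  !(Nat.beq (i ^^^ j ^^^ k ^^^ l) 0) && hs.all (fun w => K.any (fun v => Nat.beq v w)) &&
  (List.range 16).all (fun u => Nat.beq (mk6 i j k l u) t || !(Nat.beq (pc (mk6 i j k l u)) 6) ||
    hs.any (fun w => Nat.beq (pc (w &&& mk6 i j k l u)) 4 || Nat.beq (pc (w &&& mk6 i j k l u)) 5))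

lemma step_sound {P : ℕ → Prop} (H : Hex P) {K : List ℕ} (hK : ∀ m ∈ K, P m) {i j k l t : ℕ}
    {hs : List ℕ} (h : stepOK K i j k l t hs = true) : P t := by
  unfold stepOK at h
  simp only [Bool.and_eq_true, List.all_eq_true, List.any_eq_true, Bool.or_eq_true,
    Bool.not_eq_true', Nat.blt_eq, Nat.beq_eq, List.mem_range] at h
  obtain ⟨⟨⟨⟨⟨⟨⟨hi, hj⟩, hk⟩, hl⟩, h4⟩, hx⟩, hh⟩, hu⟩ := h
  obtain ⟨u, hu16, hP⟩ := H.cov i j k l hi hj hk hl h4 (Nat.ne_of_beq_eq_false hx)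
  rcases hu u hu16 with (h1 | h1) | ⟨w, hw, h1⟩
  · rwa [h1] at hP
  · exact absurd (H.six _ hP) (Nat.ne_of_beq_eq_false h1)
  · obtain ⟨v, hv, rfl⟩ := hh w hw
    have := H.far _ _ hP (hK _ hv)
    rcases h1 with h1 | h1
    · exact absurd h1 this.1
    · exact absurd h1 this.2

/-- check of a sequence of propagation steps -/
def runOK : List (ℕ × ℕ × ℕ × ℕ × ℕ × List ℕ) → List ℕ → Bool
  | [], _ => true
  | (i, j, k, l, t, hs) :: es, K => stepOK K i j k l t hs && runOK es (t :: K)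

lemma run_sound {P : ℕ → Prop} (H : Hex P) : ∀ (es : List (ℕ × ℕ × ℕ × ℕ × ℕ × List ℕ))
    (K : List ℕ), (∀ m ∈ K, P m) → runOK es K = true → ∀ e ∈ es, P e.2.2.2.2.1
  | [], _, _, _ => by simp
  | (i, j, k, l, t, hs) :: es, K, hK, h => by
    simp only [runOK, Bool.and_eq_true] at h
    have ht := step_sound H hK h.1
    have := run_sound H es (t :: K) (by
      intro m hm
      rcases List.mem_cons.mp hm with rfl | hm
      · exact ht
      · exact hK m hm) h.2
    intro e he
    rcases List.mem_cons.mp he with rfl | he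
    · exact ht
    · exact this e he

/-- the propagation sequence -/
def steps : List (ℕ × ℕ × ℕ × ℕ × ℕ × List ℕ) :=
  [(0, 1, 2, 6, 18503, [33047, 5159]),
   (0, 1, 2, 7, 8839, [33047, 5159]),
   (0, 1, 3, 4, 10267, [5159, 33047]),
   (0, 1, 3, 5, 16939, [33047, 5159]),
   (0, 1, 3, 6, 4427, [8839, 18503]),
   (0, 1, 3, 7, 33931, [8839, 18503]),
   (0, 1, 4, 6, 1619, [33047, 18503]),
   (0, 1, 4, 7, 20627, [33047, 8839]),
   (0, 1, 5, 6, 41059, [5159, 18503]),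
   (0, 1, 5, 7, 2467, [5159, 8839]),
   (0, 1, 8, 10, 25859, [5159, 33047]),
   (0, 1, 9, 11, 39427, [18503, 8839]),
   (0, 2, 3, 4, 4637, [33047, 18503]),
   (0, 2, 3, 5, 34861, [5159, 8839]),
   (0, 2, 3, 6, 9293, [33047, 18503]),
   (0, 2, 3, 7, 16781, [8839, 5159]),
   (0, 2, 4, 5, 24629, [33047, 5159]),
   (0, 2, 4, 7, 3221, [33047, 8839]),
   (0, 2, 5, 6, 869, [5159, 18503]),
   (0, 2, 6, 7, 37061, [18503, 8839]),
   (0, 2, 8, 11, 14597, [18503, 33047]),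
   (0, 2, 9, 10, 50693, [8839, 5159]),
   (0, 3, 4, 5, 1337, [10267, 16939]),
   (0, 3, 4, 6, 49241, [10267, 4427]),
   (0, 3, 5, 7, 12457, [16939, 33931]),
   (0, 3, 6, 7, 2761, [4427, 33931]),
   (0, 3, 8, 9, 41737, [16939, 4427]),
   (0, 3, 10, 11, 23561, [33931, 10267]),
   (0, 4, 5, 6, 6257, [33047, 16939, 1619]),
   (0, 4, 5, 7, 33457, [20627, 10267]),
   (0, 4, 6, 7, 8657, [1619, 18503]),
   (0, 4, 8, 9, 19217, [33047, 4427]),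
   (0, 4, 10, 12, 46097, [5159, 1619]),
   (0, 5, 6, 7, 17633, [4427, 8839, 41059]),
   (0, 5, 8, 12, 53537, [4427, 5159]),
   (0, 5, 9, 10, 11809, [16939, 5159]),
   (0, 6, 8, 10, 36161, [1619, 4427]),
   (0, 6, 9, 12, 29249, [4427, 1619]),
   (0, 7, 8, 9, 6017, [8839, 16939]),
   (0, 7, 11, 13, 59521, [8839, 10267]),
   (1, 2, 3, 4, 17438, [8839, 33047]),
   (1, 2, 3, 5, 8494, [5159, 18503]),
   (1, 2, 3, 6, 33358, [18503, 5159]),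
   (1, 2, 3, 7, 6286, [33047, 8839]),
   (1, 2, 4, 5, 2614, [33047, 5159]),
   (1, 2, 4, 6, 12374, [33047, 18503]),
   (1, 2, 5, 7, 49318, [8839, 5159]),
   (1, 2, 6, 7, 1478, [18503, 8839]),
   (1, 2, 8, 9, 21254, [8839, 33047]),
   (1, 2, 10, 11, 44038, [5159, 18503]),
   (1, 3, 4, 5, 36922, [10267, 16939]),
   (1, 3, 4, 7, 922, [10267, 33931]),
   (1, 3, 5, 6, 3178, [16939, 4427]),
   (1, 3, 6, 7, 24778, [4427, 33931]),
   (1, 3, 8, 11, 51466, [4427, 10267]),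
   (1, 3, 9, 10, 13834, [33931, 16939]),
   (1, 4, 5, 6, 16754, [1619, 10267]),
   (1, 4, 5, 7, 9394, [33047, 16939, 20627]),
   (1, 4, 6, 7, 35026, [4427, 8839, 1619]),
   (1, 4, 8, 10, 7442, [33047, 1619]),
   (1, 4, 9, 13, 57874, [8839, 10267]),
   (1, 5, 6, 7, 4834, [41059, 18503]),
   (1, 5, 8, 9, 34594, [8839, 16939]),
   (1, 5, 11, 12, 30754, [5159, 20627]),
   (1, 6, 8, 9, 11074, [4427, 33047]),
   (1, 6, 10, 12, 54338, [4427, 5159]),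
   (1, 7, 8, 12, 45442, [2467, 4427]),
   (1, 7, 9, 10, 20098, [8839, 33931]),
   (2, 3, 4, 6, 2396, [4637, 9293]),
   (2, 3, 4, 7, 41116, [4637, 16781]),
   (2, 3, 5, 6, 20588, [9293, 34861]),
   (2, 3, 5, 7, 1708, [2467, 34861, 16781]),
   (2, 3, 8, 10, 38156, [9293, 16781]),
   (2, 3, 9, 11, 27148, [34861, 4637]),
   (2, 4, 5, 6, 33908, [24629, 4637]),
   (2, 4, 5, 7, 4532, [8839, 24629, 34861]),
   (2, 4, 6, 7, 17108, [33047, 9293, 3221]),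
   (2, 4, 8, 9, 10004, [33047, 4637]),
   (2, 4, 11, 12, 55316, [3221, 4637]),
   (2, 5, 6, 7, 10468, [16781, 869, 5159]),
   (2, 5, 8, 10, 19748, [5159, 9293]),
   (2, 5, 9, 12, 45604, [5159, 4637]),
   (2, 6, 8, 13, 57668, [9293, 24629]),
   (2, 6, 9, 10, 7748, [869, 1619]),
   (2, 7, 8, 9, 35716, [8839, 16781]),
   (2, 7, 10, 12, 29828, [3221, 5159]),
   (3, 4, 5, 6, 8824, [4427, 34861, 1337]),
   (3, 4, 5, 7, 18616, [1337, 4637]),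
   (3, 4, 6, 7, 5336, [10267, 16781, 49241]),
   (3, 4, 8, 12, 28952, [4427, 4637]),
   (3, 4, 9, 10, 36376, [4637, 16939]),
   (3, 5, 6, 7, 33256, [16939, 9293, 12457]),
   (3, 5, 8, 9, 6952, [16939, 1337]),
   (3, 5, 10, 13, 58408, [9293, 1337]),
   (3, 6, 8, 9, 18248, [16939, 2761]),
   (3, 6, 11, 12, 47176, [4427, 12457]),
   (3, 7, 8, 10, 11656, [4427, 33931, 16781]),
   (3, 7, 9, 12, 53896, [2761, 4637]),
   (4, 5, 8, 11, 43312, [6257, 10267]),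
   (4, 5, 9, 10, 22064, [5159, 33457, 16939]),
   (4, 6, 8, 9, 37712, [8657, 33047]),
   (4, 6, 10, 11, 27728, [6257, 18503]),
   (4, 7, 8, 10, 50576, [33047, 8657, 16781]),
   (4, 7, 9, 11, 14992, [8839, 33457, 4637]),
   (5, 6, 8, 10, 13664, [5159, 17633, 9293]),
   (5, 6, 9, 11, 51808, [18503, 6257, 34861]),
   (5, 7, 8, 9, 25504, [33457, 8839]),
   (5, 7, 10, 11, 40096, [17633, 5159]),
   (6, 7, 8, 11, 22976, [8657, 4427]),
   (6, 7, 9, 10, 42688, [17633, 33931])]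

/-- all hexads -/
def words : List ℕ := 33047 :: 5159 :: steps.map (fun e => e.2.2.2.2.1)

lemma run_steps : runOK steps [33047, 5159] = true := by decide +kernel

lemma words_sound {P : ℕ → Prop} (H : Hex P) (h1 : P 33047) (h2 : P 5159) : ∀ m ∈ words, P m := by
  intro m hm
  rcases List.mem_cons.mp hm with rfl | hm
  · exact h1
  rcases List.mem_cons.mp hm with rfl | hm
  · exact h2
  obtain ⟨e, he, rfl⟩ := List.mem_map.mp hm
  exact run_sound H steps [33047, 5159] (by simp [h1, h2]) run_steps e he

lemma words_nodup : words.Nodup := by decide +kernel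

lemma words_length : words.length = 112 := by decide +kernel

lemma words_lt : ∀ m ∈ words, m < 2 ^ 16 := by decide +kernel

lemma fork {P : ℕ → Prop} (H : Hex P) (h : P 33047) : P 5159 ∨ P 10279 := by
  obtain ⟨u, hu, hP⟩ := H.cov 0 1 2 5 (by norm_num) (by norm_num) (by norm_num) (by norm_num)
    (by decide) (by decide)
  have key : ∀ u < 16, mk6 0 1 2 5 u = 5159 ∨ mk6 0 1 2 5 u = 10279 ∨ pc (mk6 0 1 2 5 u) ≠ 6 ∨
      pc (33047 &&& mk6 0 1 2 5 u) = 4 ∨ pc (33047 &&& mk6 0 1 2 5 u) = 5 := by decide +kernel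
  have h6 := H.six _ hP
  have hf := H.far _ _ hP h
  rcases key u hu with h1 | h1 | h1 | h1 | h1
  · rw [h1] at hP; exact Or.inl hP
  · rw [h1] at hP; exact Or.inr hP
  · exact absurd h6 h1
  · exact absurd h1 hf.1
  · exact absurd h1 hf.2

end cert
end NR

namespace NR
set_option linter.unusedSectionVars false
set_option linter.unusedVariables false
open Finset
open scoped symmDiff

section link
variable {α : Type} [Fintype α] [DecidableEq α] {C : Finset (Finset α)}

/-- the set with a given bit mask -/
def dec (φ : Fin 16 ≃ α) (m : ℕ) : Finset α := univ.filter (fun a => m.testBit (φ.symm a))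

lemma mem_dec (φ : Fin 16 ≃ α) (m : ℕ) (i : Fin 16) : φ i ∈ dec φ m ↔ m.testBit i = true := by
  simp [dec]

lemma card_dec (φ : Fin 16 ≃ α) (m : ℕ) : #(dec φ m) = pc m := by
  have h1 : dec φ m = (univ.filter (fun i : Fin 16 => m.testBit i)).map φ.toEmbedding := by
    ext a
    simp [dec]
  rw [h1, card_map, card_filter]
  have : ∀ b : Bool, (if b = true then 1 else 0) = b.toNat := by decide
  simp only [this, Fin.sum_univ_succ, Fin.sum_univ_zero]
  unfold pc
  simp [Fin.succ]
  ring

lemma dec_and (φ : Fin 16 ≃ α) (m w : ℕ) : dec φ (m &&& w) = dec φ m ∩ dec φ w := by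
  ext a
  simp [dec]

lemma dec_or (φ : Fin 16 ≃ α) (m w : ℕ) : dec φ (m ||| w) = dec φ m ∪ dec φ w := by
  ext a
  simp [dec]

lemma dec_pow (φ : Fin 16 ≃ α) (i : Fin 16) : dec φ (2 ^ i.val) = {φ i} := by
  ext a
  simp only [dec, mem_filter, Finset.mem_univ, true_and, Finset.mem_singleton, Nat.testBit_two_pow,
    decide_eq_true_eq]
  rw [Fin.val_inj, eq_comm, Equiv.symm_apply_eq]

lemma dec_inj (φ : Fin 16 ≃ α) {m w : ℕ} (hm : m < 2 ^ 16) (hw : w < 2 ^ 16)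
    (h : dec φ m = dec φ w) : m = w := by
  apply Nat.eq_of_testBit_eq
  intro i
  by_cases hi : i < 16
  · have h1 := mem_dec φ m ⟨i, hi⟩
    have h2 := mem_dec φ w ⟨i, hi⟩
    rw [h, h2] at h1
    exact (Bool.eq_iff_iff.mpr h1).symm
  · have : 2 ^ 16 ≤ 2 ^ i := Nat.pow_le_pow_right (by norm_num) (by omega)
    rw [Nat.testBit_lt_two_pow (by omega), Nat.testBit_lt_two_pow (by omega)]

lemma dec_mk4 (φ : Fin 16 ≃ α) (i j k l : Fin 16) :
    dec φ (mk4 i j k l) = {φ i, φ j, φ k, φ l} := by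
  unfold mk4
  simp only [dec_or, dec_pow]
  ext; simp

lemma hex (hG : Good C) (h0 : ∅ ∈ C) (φ : Fin 16 ≃ α) (hφ : Co C φ) :
    Hex (fun m => dec φ m ∈ C ∧ pc m = 6) where
  six := fun m h => h.2
  far := by
    rintro m w ⟨h1, h2⟩ ⟨h3, h4⟩
    rw [← card_dec φ] at h2 h4 ⊢
    rw [dec_and]
    by_cases h : dec φ w = dec φ m
    · rw [h, Finset.inter_self]; omega
    · have := meet hG h3 h1 h
      omega
  cov := by
    intro i j k l hi hj hk hl h4 hx
    lift i to Fin 16 using hi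
    lift j to Fin 16 using hj
    lift k to Fin 16 using hk
    lift l to Fin 16 using hl
    rw [← card_dec φ, dec_mk4] at h4
    have hpos : 0 < deg C 6 {φ i, φ j, φ k, φ l} := by
      by_contra hz
      have hz : deg C 6 {φ i, φ j, φ k, φ l} = 0 := by omega
      apply hx
      rw [Nat.xor_assoc, ← hφ]
      left
      have e : ∀ (a : α) (s : Finset α), #(insert a s) ≤ #s + 1 := fun a s => card_insert_le a s
      have e' : ∀ (a : α) (s : Finset α), a ∈ s → #(insert a s) = #s :=
        fun a s h => by rw [Finset.insert_eq_self.mpr h]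
      have s1 : #({φ l} : Finset α) = 1 := card_singleton _
      have s2 := e (φ k) {φ l}
      have s3 := e (φ j) {φ k, φ l}
      have s4 := e (φ i) {φ j, φ k, φ l}
      have u2 : φ k ∉ ({φ l} : Finset α) := fun h => by have := e' _ _ h; omega
      have u3 : φ j ∉ ({φ k, φ l} : Finset α) := fun h => by have := e' _ _ h; omega
      have u4 : φ i ∉ ({φ j, φ k, φ l} : Finset α) := fun h => by have := e' _ _ h; omega
      simp only [Finset.mem_insert, Finset.mem_singleton, not_or] at u2 u3 u4
      exact ⟨u4.1, u4.2.1, u4.2.2, u3.1, u3.2, u2, hz⟩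
    obtain ⟨h, hh, h6, hs⟩ := of_deg_pos hpos
    have h2 : #(h \ {φ i, φ j, φ k, φ l}) = 2 := by rw [card_sdiff_of_subset hs]; omega
    obtain ⟨y, z, hyz, he⟩ := card_eq_two.mp h2
    have hun : ({φ i, φ j, φ k, φ l, y, z} : Finset α) = h := by
      rw [← Finset.sdiff_union_of_subset hs, he]
      ext; simp; tauto
    obtain ⟨p, hp1, hp2⟩ := hexsum hG h0 hh h6 hun.subset (hun ▸ h6)
    obtain ⟨u, rfl⟩ := φ.surjective y
    obtain ⟨v, rfl⟩ := φ.surjective z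
    obtain ⟨q, rfl⟩ := φ.surjective p
    rw [hφ] at hp1 hp2
    have hv : i.val ^^^ j.val ^^^ k.val ^^^ l.val ^^^ u.val = v.val := by
      rw [Nat.xor_eq_zero_iff] at hp1 hp2
      have hq : q.val = i.val ^^^ j.val ^^^ k.val := by
        rw [hp1, Nat.xor_comm k.val q.val, Nat.xor_assoc, Nat.xor_self, Nat.xor_zero]
      rw [← hq, hp2, Nat.xor_comm u.val v.val, Nat.xor_assoc, Nat.xor_self, Nat.xor_zero]
    have hd : dec φ (mk6 i j k l u) = h := by
      unfold mk6
      rw [hv, dec_or, dec_or, dec_mk4, dec_pow, dec_pow, ← hun]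
      ext; simp
    refine ⟨u, u.isLt, ?_, ?_⟩
    · rw [hd]; exact hh
    · rw [← card_dec φ, hd]; exact h6

lemma six_count (hG : Good C) (h0 : ∅ ∈ C) : #{c ∈ C | #c = 6} = 112 := by
  have L := loc hG h0
  have c2 : ∀ P : Finset α, #P = 2 → deg C 6 P = 14 := by
    intro P hP
    have h := double C 6 P
    rw [sum_congr rfl (fun p hp => L.six (insert p P)
      (by rw [card_insert_of_notMem (by simpa using hp), hP]))] at h
    rw [sum_const, card_compl' hG, hP] at h
    simp at h; omega
  have c1 : ∀ P : Finset α, #P = 1 → deg C 6 P = 42 := by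
    intro P hP
    have h := double C 6 P
    rw [sum_congr rfl (fun p hp => c2 (insert p P)
      (by rw [card_insert_of_notMem (by simpa using hp), hP]))] at h
    rw [sum_const, card_compl' hG, hP] at h
    simp at h; omega
  have h := double C 6 ∅
  rw [sum_congr rfl (fun p hp => c1 (insert p ∅)
      (by rw [card_insert_of_notMem (by simpa using hp)]; simp))] at h
  rw [sum_const, card_compl' hG] at h
  simp at h
  have : deg C 6 ∅ = #{c ∈ C | #c = 6} := by simp [deg]
  omega

/-- exchanging the two possible choices -/
def tau : Equiv.Perm (Fin 16) where
  toFun i := if 8 ≤ i.val then i ^^^ 7 else i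
  invFun i := if 8 ≤ i.val then i ^^^ 7 else i
  left_inv := by decide
  right_inv := by decide

lemma tau_xor : ∀ i j : Fin 16, tau (i ^^^ j) = tau i ^^^ tau j := by decide +kernel

lemma xorv (i j : Fin 16) : (i ^^^ j).val = i.val ^^^ j.val := by
  rw [Fin.xor_val]
  exact Nat.mod_eq_of_lt (Nat.xor_lt_two_pow (n := 4) i.isLt j.isLt)

lemma tau_zero : ∀ i : Fin 16, (tau i).val = 0 ↔ i.val = 0 := by decide

lemma co_tau {φ : Fin 16 ≃ α} (hφ : Co C φ) : Co C (tau.trans φ) := by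
  intro i j k l
  rw [Equiv.trans_apply, Equiv.trans_apply, Equiv.trans_apply, Equiv.trans_apply, hφ]
  rw [← xorv, ← xorv, ← xorv, ← tau_xor, ← tau_xor, ← tau_xor, tau_zero, xorv, xorv, xorv]

lemma dec_tau (φ : Fin 16 ≃ α) (m w : ℕ) (h : ∀ i : Fin 16, m.testBit (tau.symm i) = w.testBit i) :
    dec (tau.trans φ) m = dec φ w := by
  ext a
  simp [dec, h]

theorem main_coord (hG : Good C) (h0 : ∅ ∈ C) :
    ∃ φ : Fin 16 ≃ α, Co C φ ∧ ∀ c, (#c = 6 ∧ c ∈ C) ↔ ∃ m ∈ words, dec φ m = c := by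
  obtain ⟨φ, hφ, hB, hB1⟩ : ∃ φ : Fin 16 ≃ α, Co C φ ∧ dec φ 33047 ∈ C ∧ dec φ 5159 ∈ C := by
    obtain ⟨h, hh, h6⟩ := exists_six hG h0
    obtain ⟨x, hx, h4⟩ := exists_subset_card_eq (show 3 ≤ #h by omega)
    obtain ⟨a, b, c, -, -, -, rfl⟩ := card_eq_three.mp h4
    have h3 : #(h \ {a, b, c}) = 3 := by rw [card_sdiff_of_subset hx]; omega
    obtain ⟨d, e, f, -, -, -, he⟩ := card_eq_three.mp h3
    have hun : ({a, b, c, d, e, f} : Finset α) = h := by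
      rw [← Finset.sdiff_union_of_subset hx, he]
      ext; simp; tauto
    obtain ⟨φ, hφ, e0, e1, e2, e3, e4, e5⟩ := coord hG h0 hh h6 hun.subset (hun ▸ h6)
    have hB : dec φ 33047 ∈ C := by
      have : dec φ 33047 = h := by
        rw [show 33047 = 2 ^ (0 : Fin 16).val ||| 2 ^ (1 : Fin 16).val ||| 2 ^ (2 : Fin 16).val |||
          2 ^ (4 : Fin 16).val ||| 2 ^ (8 : Fin 16).val ||| 2 ^ (15 : Fin 16).val by decide]
        simp only [dec_or, dec_pow, e0, e1, e2, e3, e4, e5]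
        rw [← hun]
        ext; simp
      rw [this]; exact hh
    rcases fork (hex hG h0 φ hφ) ⟨hB, by decide⟩ with h1 | h1
    · exact ⟨φ, hφ, hB, h1.1⟩
    · refine ⟨tau.trans φ, co_tau hφ, ?_, ?_⟩
      · rw [dec_tau φ 33047 33047 (by decide)]; exact hB
      · rw [dec_tau φ 5159 10279 (by decide)]; exact h1.1
  refine ⟨φ, hφ, ?_⟩
  have hw := words_sound (hex hG h0 φ hφ) ⟨hB, by decide⟩ ⟨hB1, by decide⟩
  have hsub : words.toFinset.image (dec φ) ⊆ ({c ∈ C | #c = 6} : Finset _) := by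
    intro c hc
    rw [Finset.mem_image] at hc
    obtain ⟨m, hm, rfl⟩ := hc
    rw [List.mem_toFinset] at hm
    rw [mem_filter, card_dec]
    exact hw m hm
  have hcard : #(words.toFinset.image (dec φ)) = 112 := by
    rw [card_image_of_injOn, List.toFinset_card_of_nodup words_nodup, words_length]
    intro m hm w hw h
    simp only [List.coe_toFinset, Set.mem_ofPred_eq] at hm hw
    exact dec_inj φ (words_lt m hm) (words_lt w hw) h
  have heq := eq_of_subset_of_card_le hsub (by rw [six_count hG h0, hcard])
  intro c
  have := Finset.ext_iff.mp heq c
  rw [Finset.mem_image, mem_filter] at this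
  simp only [List.mem_toFinset] at this
  rw [this, and_comm]

/-- two good codes differ by a permutation -/
theorem main_equiv {β : Type} [Fintype β] [DecidableEq β] {D : Finset (Finset β)}
    (hG : Good C) (h0 : ∅ ∈ C) (hG' : Good D) (h0' : ∅ ∈ D) :
    ∃ σ : α ≃ β, ∀ c : Finset α, c.map σ.toEmbedding ∈ D ↔ c ∈ C := by
  obtain ⟨φ, hφ, hw⟩ := main_coord hG h0
  obtain ⟨ψ, hψ, hv⟩ := main_coord hG' h0'
  refine ⟨φ.symm.trans ψ, ?_⟩
  have hdec : ∀ m, (dec φ m).map (φ.symm.trans ψ).toEmbedding = dec ψ m := by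
    intro m
    ext a
    simp only [Finset.mem_map_equiv]
    simp [dec]
  have hinj : ∀ c c' : Finset α, c.map (φ.symm.trans ψ).toEmbedding =
      c'.map (φ.symm.trans ψ).toEmbedding ↔ c = c' := fun c c' => Finset.map_inj
  have hsix : ∀ c : Finset α, (#(c.map (φ.symm.trans ψ).toEmbedding) = 6 ∧
      c.map (φ.symm.trans ψ).toEmbedding ∈ D) ↔ (#c = 6 ∧ c ∈ C) := by
    intro c
    rw [hw, hv]
    simp only [← hdec, hinj]
  have hcl : ∀ c : Finset α, Cl D (c.map (φ.symm.trans ψ).toEmbedding) ↔ Cl C c := by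
    intro c
    have m : ∀ i : Fin 16, ψ i ∈ c.map (φ.symm.trans ψ).toEmbedding ↔ φ i ∈ c := by
      intro i
      rw [Finset.mem_map_equiv]
      simp
    unfold Cl
    constructor
    · intro h a b c d
      obtain ⟨a, rfl⟩ := φ.surjective a
      obtain ⟨b, rfl⟩ := φ.surjective b
      obtain ⟨c, rfl⟩ := φ.surjective c
      obtain ⟨d, rfl⟩ := φ.surjective d
      have := h (ψ a) (ψ b) (ψ c) (ψ d)
      rwa [m, m, m, m, hψ, ← hφ] at this
    · intro h a b c d
      obtain ⟨a, rfl⟩ := ψ.surjective a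
      obtain ⟨b, rfl⟩ := ψ.surjective b
      obtain ⟨c, rfl⟩ := ψ.surjective c
      obtain ⟨d, rfl⟩ := ψ.surjective d
      have := h (φ a) (φ b) (φ c) (φ d)
      rwa [← m, ← m, ← m, ← m, hφ, ← hψ] at this
  have hcompl : ∀ c : Finset α, (c.map (φ.symm.trans ψ).toEmbedding)ᶜ =
      cᶜ.map (φ.symm.trans ψ).toEmbedding := by
    intro c
    ext a
    simp only [Finset.mem_compl, Finset.mem_map_equiv]
  intro c
  rw [mem_iff hG' h0', mem_iff hG h0 c, hcompl, hsix, hsix, hcl, Finset.map_eq_empty, card_map]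
  have hu : c.map (φ.symm.trans ψ).toEmbedding = univ ↔ c = univ := by
    rw [← Finset.compl_eq_empty_iff, hcompl, Finset.map_eq_empty, Finset.compl_eq_empty_iff]
  rw [hu]

end link
end NR

open Set

/-- Distance from a vertex to a code in the binary Hamming space. -/
noncomputable def distToCode {m : ℕ} (C : Set (Fin m → ZMod 2)) (x : Fin m → ZMod 2) : ℕ :=
  sInf {d | ∃ c ∈ C, hammingDist x c = d}

/-- `C` has minimum distance `δ`. -/
def IsMinDist {m : ℕ} (C : Set (Fin m → ZMod 2)) (δ : ℕ) : Prop :=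
  (∀ x ∈ C, ∀ y ∈ C, x ≠ y → δ ≤ hammingDist x y) ∧
  ∃ x ∈ C, ∃ y ∈ C, x ≠ y ∧ hammingDist x y = δ

/-- `C` is completely regular: the number of codewords at distance `k` from `γ`
depends only on `distToCode C γ` and `k`. -/
def IsCompletelyRegular {m : ℕ} (C : Set (Fin m → ZMod 2)) : Prop :=
  ∀ γ γ' : Fin m → ZMod 2, distToCode C γ = distToCode C γ' →
    ∀ k : ℕ, {c ∈ C | hammingDist γ c = k}.ncard = {c ∈ C | hammingDist γ' c = k}.ncard

namespace NR
open scoped symmDiff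

lemma z2 (a b : ZMod 2) (h : a ≠ 0 ↔ b ≠ 0) : a = b := by revert a b; decide

lemma z2' (a b : ZMod 2) : a ≠ b ↔ ((a ≠ 0 ∧ ¬ b ≠ 0) ∨ (b ≠ 0 ∧ ¬ a ≠ 0)) := by
  revert a b; decide

/-- support of a vector -/
def sp (x : Fin 16 → ZMod 2) : Finset (Fin 16) := Finset.univ.filter (fun i => x i ≠ 0)

lemma mem_sp (x : Fin 16 → ZMod 2) (i : Fin 16) : i ∈ sp x ↔ x i ≠ 0 := by simp [sp]

lemma sp_inj : Function.Injective sp := by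
  intro x y h
  funext i
  apply z2
  rw [← mem_sp, ← mem_sp, h]

lemma sp_surj (s : Finset (Fin 16)) : ∃ x, sp x = s := by
  refine ⟨fun i => if i ∈ s then 1 else 0, ?_⟩
  ext i
  simp [mem_sp]

lemma sp_dist (x y : Fin 16 → ZMod 2) : hammingDist x y = (sp x ∆ sp y).card := by
  unfold hammingDist
  congr 1
  ext i
  rw [Finset.mem_symmDiff, mem_sp, mem_sp, Finset.mem_filter, z2']
  simp

lemma sp_add (x y : Fin 16 → ZMod 2) : sp (x + y) = sp x ∆ sp y := by
  ext i
  rw [Finset.mem_symmDiff, mem_sp, mem_sp, mem_sp, ← z2', Pi.add_apply]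
  generalize x i = a
  generalize y i = b
  revert a b; decide

open Classical in
/-- the code as a family of sets -/
noncomputable def fam (C : Set (Fin 16 → ZMod 2)) : Finset (Finset (Fin 16)) :=
  Finset.univ.filter (fun s => ∃ c ∈ C, sp c = s)

lemma mem_fam (C : Set (Fin 16 → ZMod 2)) (c : Fin 16 → ZMod 2) : sp c ∈ fam C ↔ c ∈ C := by
  classical
  refine Finset.mem_filter.trans ?_
  constructor
  · rintro ⟨-, d, hd, h⟩
    rwa [← sp_inj h]
  · intro h
    exact ⟨Finset.mem_univ _, c, h, rfl⟩

lemma N_fam (C : Set (Fin 16 → ZMod 2)) (x : Fin 16 → ZMod 2) (k : ℕ) :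
    N (fam C) (sp x) k = {c ∈ C | hammingDist x c = k}.ncard := by
  unfold N
  rw [← Set.ncard_coe_finset, ← Set.ncard_image_of_injective _ sp_inj]
  congr 1
  ext s
  obtain ⟨c, rfl⟩ := sp_surj s
  rw [Finset.mem_coe, Finset.mem_filter, mem_fam, sp_inj.mem_set_image]
  rw [← sp_dist]
  rfl

lemma isD_fam (C : Set (Fin 16 → ZMod 2)) (x : Fin 16 → ZMod 2) (i : ℕ)
    (h : IsD (fam C) i (sp x)) : distToCode C x = i := by
  obtain ⟨⟨s, hs, h1⟩, h2⟩ := h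
  obtain ⟨c, rfl⟩ := sp_surj s
  rw [mem_fam] at hs
  rw [← sp_dist] at h1
  unfold distToCode
  apply le_antisymm
  · exact Nat.sInf_le ⟨c, hs, h1⟩
  · obtain ⟨d, hd, he⟩ := Nat.sInf_mem (s := {d | ∃ c ∈ C, hammingDist x c = d}) ⟨i, c, hs, h1⟩
    rw [← he, sp_dist]
    exact h2 _ ((mem_fam C d).mpr hd)

lemma good_fam {C : Set (Fin 16 → ZMod 2)} (hreg : IsCompletelyRegular C) (hd : IsMinDist C 6) :
    Good (fam C) where
  card := by simp
  reg := by
    intro i x y hx hy k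
    obtain ⟨x, rfl⟩ := sp_surj x
    obtain ⟨y, rfl⟩ := sp_surj y
    rw [N_fam, N_fam]
    exact hreg x y ((isD_fam C x i hx).trans (isD_fam C y i hy).symm) k
  dist := by
    intro x hx y hy hne
    obtain ⟨x, rfl⟩ := sp_surj x
    obtain ⟨y, rfl⟩ := sp_surj y
    rw [mem_fam] at hx hy
    rw [← sp_dist]
    exact hd.1 x hx y hy (fun h => hne (by rw [h]))
  ex := by
    obtain ⟨x, hx, y, hy, hne, h⟩ := hd.2
    exact ⟨sp x, (mem_fam _ _).mpr hx, sp y, (mem_fam _ _).mpr hy, fun e => hne (sp_inj e),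
      by rw [← sp_dist]; exact h⟩

lemma sp_perm (σ : Equiv.Perm (Fin 16)) (x : Fin 16 → ZMod 2) :
    sp (fun i => x (σ.symm i)) = (sp x).map σ.toEmbedding := by
  ext i
  rw [Finset.mem_map_equiv, mem_sp, mem_sp]

lemma add_add_self (x v : Fin 16 → ZMod 2) : x + v + v = x := by
  have : v + v = 0 := by
    funext i
    rw [Pi.add_apply]
    exact (by decide : ∀ a : ZMod 2, a + a = 0) _
  rw [add_assoc, this, add_zero]

end NR

/-- Any two binary completely regular codes of length 16 with minimum distance 6
are equivalent (both are equivalent to the Nordstrom-Robinson code). -/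
theorem stmt_0 (C C' : Set (Fin 16 → ZMod 2)) (hC : C.Nonempty) (hC' : C'.Nonempty)
    (hreg : IsCompletelyRegular C) (hreg' : IsCompletelyRegular C')
    (hd : IsMinDist C 6) (hd' : IsMinDist C' 6) :
    ∃ (σ : Equiv.Perm (Fin 16)) (v : Fin 16 → ZMod 2),
      C' = (fun α => (fun i => α (σ.symm i)) + v) '' C := by
  obtain ⟨w, hw⟩ := hC
  obtain ⟨w', hw'⟩ := hC'
  have hG := NR.good_sh (NR.good_fam hreg hd) (NR.sp w)
  have hG' := NR.good_sh (NR.good_fam hreg' hd') (NR.sp w')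
  obtain ⟨σ, hσ⟩ := NR.main_equiv hG (NR.empty_sh ((NR.mem_fam C w).mpr hw)) hG'
    (NR.empty_sh ((NR.mem_fam C' w').mpr hw'))
  have key : ∀ x : Fin 16 → ZMod 2, (fun i => x (σ.symm i)) + w' ∈ C' ↔ x + w ∈ C := by
    intro x
    have h := hσ (NR.sp x)
    rw [← NR.sp_perm, NR.mem_sh, NR.mem_sh, ← NR.sp_add, ← NR.sp_add, NR.mem_fam, NR.mem_fam] at h
    exact h
  refine ⟨σ, (fun i => w (σ.symm i)) + w', ?_⟩
  ext y
  constructor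
  · intro hy
    refine ⟨(fun i => (y + w') (σ i)) + w, ?_, ?_⟩
    · rw [← key]
      have : (fun i => (fun i => (y + w') (σ i)) (σ.symm i)) = y + w' := by
        funext i; simp
      rw [this, NR.add_add_self]
      exact hy
    · have e : (fun i => ((fun i => (y + w') (σ i)) + w) (σ.symm i)) =
          (y + w') + (fun i => w (σ.symm i)) := by
        funext i; simp
      simp only [e]
      rw [← add_assoc, NR.add_add_self, NR.add_add_self]
  · rintro ⟨x, hx, rfl⟩
    have h := (key (x + w)).mpr (by rw [NR.add_add_self]; exact hx)
    have e : (fun i => (x + w) (σ.symm i)) = (fun i => x (σ.symm i)) + (fun i => w (σ.symm i)) := by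
      funext i; simp
    rw [e, add_assoc] at h
    exact h
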